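/- Let Ω⁻, Ω⁺ ⊆ ℝ^d be open convex sets, let μ⁻, μ⁺ be absolutely continuous probability measures compactly supported in Ω⁻ and Ω⁺ respectively with densities in L^∞, and let c : Ω⁻ × Ω⁺ → ℝ be a C² cost that is infinitesimally twisted. Then there exist constants m, M ≥ 0 such that for every ε ∈ (0,1): v_0 + (d/2)·ε·log(1/ε) − m·ε ≤ v_ε ≤ v_0 + (d/2)·ε·log(1/ε) + M·ε; in particular v_ε = v_0 + (d/2)·ε·log(1/ε) + O(ε) as ε → 0⁺. -/

import Mathlib

open MeasureTheory Real Set Filter Classical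
open scoped ENNReal NNReal Topology

noncomputable section

/-- Relative entropy (Kullback–Leibler divergence) `Ent(γ | q)`, with values in `EReal`:
it equals `∫ ρ log ρ dq` if `γ = ρ·q` (with `ρ log ρ` integrable) and `+∞` otherwise. -/
def Ent {α : Type*} [MeasurableSpace α] (γ q : Measure α) : EReal :=
  if γ ≪ q ∧ Integrable (fun x => ((γ.rnDeriv q) x).toReal * Real.log ((γ.rnDeriv q) x).toReal) q
  then ((∫ x, ((γ.rnDeriv q) x).toReal * Real.log ((γ.rnDeriv q) x).toReal ∂q : ℝ) : EReal)
  else ⊤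

/-- Entropic optimal transport cost
`v_ε = inf { ∫ c dγ + ε Ent(γ | μ⁻ ⊗ μ⁺) : γ coupling of μ⁻ and μ⁺ }`. -/
def entCost {α β : Type*} [MeasurableSpace α] [MeasurableSpace β]
    (μm : Measure α) (μp : Measure β) (c : α × β → ℝ) (ε : ℝ) : EReal :=
  sInf {v : EReal | ∃ γ : Measure (α × β), IsProbabilityMeasure γ ∧ γ.fst = μm ∧ γ.snd = μp ∧
    v = ((∫ p, c p ∂γ : ℝ) : EReal) + (ε : EReal) * Ent γ (μm.prod μp)}

/-- The cross second derivative matrix `∇²ₓᵧ c(x,y) = (∂²c/∂xᵢ∂yⱼ)ᵢⱼ`. -/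
def crossDeriv {d : ℕ} (c : EuclideanSpace ℝ (Fin d) × EuclideanSpace ℝ (Fin d) → ℝ)
    (x y : EuclideanSpace ℝ (Fin d)) : Matrix (Fin d) (Fin d) ℝ :=
  Matrix.of fun i j =>
    fderiv ℝ (fun y' => fderiv ℝ (fun x' => c (x', y')) x (EuclideanSpace.single i 1)) y
      (EuclideanSpace.single j 1)

/-!
The twist makes `c` look locally like a bilinear cost `⟪x, A y⟫` with `A` invertible, for which only
the combination `x - A y` of the `2d` coordinates matters.

For the upper bound, an optimal coupling is replaced by products of its marginals on the cells of a
partition which freezes `x - A y` up to `√ε`. This changes the transport cost by `O(ε)`, and the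
entropy is at most the logarithm of the number of cells, which is `(d/2) log (1/ε) + O(1)`.

For the lower bound, let `φ ⊕ ψ ≤ c` be nearly optimal dual potentials. By the Gibbs variational
inequality, `v_ε ≥ v_0 - ε log ∫ exp (-(c - φ ⊕ ψ) / ε) d(μ⁻ ⊗ μ⁺)` up to an arbitrarily small
error. By the twist, the gap `c - φ ⊕ ψ` grows quadratically along the fibres of `x - A y`, so the
integral over each fibre is a Gaussian one, and the whole integral is `O(ε^{d/2})`.
-/

open InformationTheory ProbabilityTheory
open scoped BoundedContinuousFunction

section Coupling

variable {α β α' β' : Type*} [MeasurableSpace α] [MeasurableSpace β] [MeasurableSpace α']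
  [MeasurableSpace β'] {μ : Measure α} {ν : Measure β} {γ : Measure (α × β)}

/-- `γ` is a coupling (transport plan) of `μ` and `ν`: its marginals are `μ` and `ν`. -/
structure IsCoupling (γ : Measure (α × β)) (μ : Measure α) (ν : Measure β) : Prop where
  fst_eq : γ.fst = μ
  snd_eq : γ.snd = ν

theorem isCoupling_prod [IsProbabilityMeasure μ] [IsProbabilityMeasure ν] :
    IsCoupling (μ.prod ν) μ ν :=
  ⟨Measure.fst_prod, Measure.snd_prod⟩

namespace IsCoupling

theorem isProbabilityMeasure [IsProbabilityMeasure μ] (h : IsCoupling γ μ ν) :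
    IsProbabilityMeasure γ :=
  ⟨by rw [← Measure.fst_univ, h.fst_eq, measure_univ]⟩

theorem isFiniteMeasure [IsFiniteMeasure μ] (h : IsCoupling γ μ ν) : IsFiniteMeasure γ :=
  ⟨by rw [← Measure.fst_univ, h.fst_eq]; exact measure_lt_top μ univ⟩

theorem measurePreserving_fst (h : IsCoupling γ μ ν) : MeasurePreserving Prod.fst γ μ :=
  ⟨measurable_fst, h.fst_eq⟩

theorem measurePreserving_snd (h : IsCoupling γ μ ν) : MeasurePreserving Prod.snd γ ν :=
  ⟨measurable_snd, h.snd_eq⟩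

theorem map_prodMap (h : IsCoupling γ μ ν) {f : α → α'} {g : β → β'} (hf : Measurable f)
    (hg : Measurable g) : IsCoupling (γ.map (Prod.map f g)) (μ.map f) (ν.map g) where
  fst_eq := by
    rw [Measure.fst, Measure.map_map measurable_fst (hf.prodMap hg), ← h.fst_eq, Measure.fst,
      Measure.map_map hf measurable_fst]
    rfl
  snd_eq := by
    rw [Measure.snd, Measure.map_map measurable_snd (hf.prodMap hg), ← h.snd_eq, Measure.snd,
      Measure.map_map hg measurable_snd]
    rfl

theorem ae_mem_prod (h : IsCoupling γ μ ν) {s : Set α} {t : Set β} (hs : ∀ᵐ x ∂μ, x ∈ s)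
    (ht : ∀ᵐ y ∂ν, y ∈ t) : ∀ᵐ p ∂γ, p ∈ s ×ˢ t := by
  filter_upwards [h.measurePreserving_fst.quasiMeasurePreserving.ae hs,
    h.measurePreserving_snd.quasiMeasurePreserving.ae ht] with p hp₁ hp₂ using ⟨hp₁, hp₂⟩

theorem integrable_add (h : IsCoupling γ μ ν) {φ : α → ℝ} {ψ : β → ℝ} (hφ : Integrable φ μ)
    (hψ : Integrable ψ ν) : Integrable (fun p => φ p.1 + ψ p.2) γ :=
  (h.measurePreserving_fst.integrable_comp_of_integrable hφ).add
    (h.measurePreserving_snd.integrable_comp_of_integrable hψ)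

theorem integral_add (h : IsCoupling γ μ ν) {φ : α → ℝ} {ψ : β → ℝ} (hφ : Integrable φ μ)
    (hψ : Integrable ψ ν) : ∫ p, (φ p.1 + ψ p.2) ∂γ = ∫ x, φ x ∂μ + ∫ y, ψ y ∂ν := by
  have hφ₁ : Integrable (fun p : α × β => φ p.1) γ :=
    h.measurePreserving_fst.integrable_comp_of_integrable hφ
  have hψ₂ : Integrable (fun p : α × β => ψ p.2) γ :=
    h.measurePreserving_snd.integrable_comp_of_integrable hψ
  rw [MeasureTheory.integral_add hφ₁ hψ₂]
  obtain ⟨rfl, rfl⟩ := h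
  rw [Measure.fst, Measure.snd, integral_map measurable_fst.aemeasurable hφ.1,
    integral_map measurable_snd.aemeasurable hψ.1]

theorem integrable_of_continuousOn [TopologicalSpace α] [TopologicalSpace β]
    [OpensMeasurableSpace (α × β)] [T2Space (α × β)] [IsFiniteMeasure μ] (h : IsCoupling γ μ ν)
    {s : Set α} {t : Set β} (hs : IsCompact s) (ht : IsCompact t) (hμs : ∀ᵐ x ∂μ, x ∈ s)
    (hνt : ∀ᵐ y ∂ν, y ∈ t) {c : α × β → ℝ} (hc : ContinuousOn c (s ×ˢ t)) : Integrable c γ := by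
  have := h.isFiniteMeasure
  have := hc.integrableOn_compact (μ := γ) (hs.prod ht)
  rwa [IntegrableOn, Measure.restrict_eq_self_of_ae_mem (h.ae_mem_prod hμs hνt)] at this

end IsCoupling

theorem entCost_le [IsProbabilityMeasure μ] (h : IsCoupling γ μ ν) (c : α × β → ℝ) (ε : ℝ) :
    entCost μ ν c ε ≤ (∫ p, c p ∂γ : ℝ) + (ε : EReal) * Ent γ (μ.prod ν) :=
  sInf_le ⟨γ, h.isProbabilityMeasure, h.fst_eq, h.snd_eq, rfl⟩

theorem le_entCost_iff [IsProbabilityMeasure μ] {c : α × β → ℝ} {ε : ℝ} {v : EReal} :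
    v ≤ entCost μ ν c ε ↔
      ∀ γ, IsCoupling γ μ ν → v ≤ (∫ p, c p ∂γ : ℝ) + (ε : EReal) * Ent γ (μ.prod ν) := by
  refine le_sInf_iff.trans ⟨fun H γ h => H _ ?_, ?_⟩
  · exact ⟨γ, h.isProbabilityMeasure, h.fst_eq, h.snd_eq, rfl⟩
  · rintro H _ ⟨γ, -, h₁, h₂, rfl⟩
    exact H γ ⟨h₁, h₂⟩

end Coupling

section Duality

theorem exists_linearMap_le_and_apply_eq {V : Type*} [AddCommGroup V] [Module ℝ V] {N : V → ℝ}
    (hsmul : ∀ a : ℝ, 0 < a → ∀ v, N (a • v) = a * N v) (hadd : ∀ v w, N (v + w) ≤ N v + N w)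
    (v : V) : ∃ L : V →ₗ[ℝ] ℝ, (∀ w, L w ≤ N w) ∧ L v = N v := by
  have hzero : N 0 = 0 := by
    have := hsmul 2 two_pos 0
    rw [smul_zero] at this
    linarith
  have hspan : ∀ a : ℝ, a * N v ≤ N (a • v) := fun a => by
    rcases lt_trichotomy a 0 with ha | rfl | ha
    · have := hadd (a • v) ((-a) • v)
      rw [hsmul _ (neg_pos.2 ha), ← add_smul, add_neg_cancel, zero_smul, hzero] at this
      linarith
    · simp [hzero]
    · rw [hsmul a ha]
  obtain ⟨L, hLv, hLN⟩ := exists_extension_of_le_sublinear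
    (LinearPMap.mkSpanSingleton' v (N v) fun a ha => by
      rcases smul_eq_zero.1 ha with rfl | rfl <;> simp [hzero]) N hsmul hadd (by
    rintro ⟨w, hw⟩
    obtain ⟨a, rfl⟩ := Submodule.mem_span_singleton.1 hw
    rw [LinearPMap.mkSpanSingleton'_apply]
    exact hspan a)
  exact ⟨L, hLN, (hLv ⟨v, Submodule.mem_span_singleton_self v⟩).trans
    (LinearPMap.mkSpanSingleton'_apply_self _ _ _ _)⟩

theorem exists_measure_integral_eq_of_nonneg {X : Type*} [TopologicalSpace X] [CompactSpace X]
    [T2Space X] [MeasurableSpace X] [BorelSpace X] (L : C(X, ℝ) →ₗ[ℝ] ℝ)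
    (hL : ∀ f, 0 ≤ f → 0 ≤ L f) :
    ∃ γ : Measure X, IsFiniteMeasure γ ∧ ∀ f : C(X, ℝ), ∫ x, f x ∂γ = L f := by
  let Λ := PositiveLinearMap.mk₀
    ({ toFun := fun f => L f.toContinuousMap
       map_add' := fun f g => L.map_add f.toContinuousMap g.toContinuousMap
       map_smul' := fun a f => L.map_smul a f.toContinuousMap } :
      CompactlySupportedContinuousMap X ℝ →ₗ[ℝ] ℝ)
    fun f hf => hL _ fun x => CompactlySupportedContinuousMap.le_def.1 hf x
  exact ⟨RealRMK.rieszMeasure Λ, inferInstance, fun f =>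
    RealRMK.integral_rieszMeasure Λ (CompactlySupportedContinuousMap.continuousMapEquiv f)⟩

variable {X Y : Type*} [TopologicalSpace X] [TopologicalSpace Y] [MeasurableSpace X]
  [MeasurableSpace Y] {μ : Measure X} {ν : Measure Y}

/-- The price `inf (∫ φ dμ + ∫ ψ dν)` of dominating `f` by a separable function `φ ⊕ ψ`. As a
function of `f` it is sublinear, and the linear functionals below it are the couplings. -/
def superhedge (μ : Measure X) (ν : Measure Y) (f : C(X × Y, ℝ)) : ℝ :=
  sInf {r : ℝ | ∃ (φ : C(X, ℝ)) (ψ : C(Y, ℝ)), (∀ x y, f (x, y) ≤ φ x + ψ y) ∧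
    r = ∫ x, φ x ∂μ + ∫ y, ψ y ∂ν}

variable [CompactSpace X] [CompactSpace Y]

theorem exists_lt_superhedge_add (μ : Measure X) (ν : Measure Y) (f : C(X × Y, ℝ)) {η : ℝ}
    (hη : 0 < η) :
    ∃ (φ : C(X, ℝ)) (ψ : C(Y, ℝ)), (∀ x y, f (x, y) ≤ φ x + ψ y) ∧
      ∫ x, φ x ∂μ + ∫ y, ψ y ∂ν < superhedge μ ν f + η := by
  have hne : {r : ℝ | ∃ (φ : C(X, ℝ)) (ψ : C(Y, ℝ)), (∀ x y, f (x, y) ≤ φ x + ψ y) ∧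
      r = ∫ x, φ x ∂μ + ∫ y, ψ y ∂ν}.Nonempty :=
    ⟨_, ContinuousMap.const X ‖f‖, 0, fun x y => by
      simpa using (le_abs_self _).trans (f.norm_coe_le_norm (x, y)), rfl⟩
  obtain ⟨r, ⟨φ, ψ, h, rfl⟩, hr⟩ := exists_lt_of_csInf_lt hne (lt_add_of_pos_right _ hη)
  exact ⟨φ, ψ, h, hr⟩

variable [BorelSpace X] [BorelSpace Y] [IsProbabilityMeasure μ] [IsProbabilityMeasure ν]

theorem integrable_continuousMap_of_compactSpace {μ : Measure X} [IsFiniteMeasure μ]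
    (φ : C(X, ℝ)) : Integrable φ μ :=
  φ.continuous.integrable_of_hasCompactSupport (HasCompactSupport.of_compactSpace _)

theorem le_integral_add_integral_of_forall_le {φ : C(X, ℝ)} {ψ : C(Y, ℝ)} {b : ℝ}
    (h : ∀ x y, b ≤ φ x + ψ y) : b ≤ ∫ x, φ x ∂μ + ∫ y, ψ y ∂ν := by
  have hφ := integrable_continuousMap_of_compactSpace (μ := μ) φ
  have hψ := integrable_continuousMap_of_compactSpace (μ := ν) ψ
  calc b = ∫ _, b ∂(μ.prod ν) := by simp
    _ ≤ ∫ p, (φ p.1 + ψ p.2) ∂(μ.prod ν) := integral_mono (integrable_const b)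
        (isCoupling_prod.integrable_add hφ hψ) fun p => h p.1 p.2
    _ = _ := isCoupling_prod.integral_add hφ hψ

theorem superhedge_le {f : C(X × Y, ℝ)} {φ : C(X, ℝ)} {ψ : C(Y, ℝ)}
    (h : ∀ x y, f (x, y) ≤ φ x + ψ y) :
    superhedge μ ν f ≤ ∫ x, φ x ∂μ + ∫ y, ψ y ∂ν := by
  refine csInf_le ⟨-‖f‖, ?_⟩ ⟨φ, ψ, h, rfl⟩
  rintro r ⟨φ', ψ', h', rfl⟩
  exact le_integral_add_integral_of_forall_le fun x y =>
    (neg_le_of_abs_le (f.norm_coe_le_norm (x, y))).trans (h' x y)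

theorem superhedge_add_le (f g : C(X × Y, ℝ)) :
    superhedge μ ν (f + g) ≤ superhedge μ ν f + superhedge μ ν g := by
  refine le_of_forall_pos_le_add fun η hη => ?_
  obtain ⟨φ, ψ, hf, hf'⟩ := exists_lt_superhedge_add μ ν f (half_pos hη)
  obtain ⟨φ', ψ', hg, hg'⟩ := exists_lt_superhedge_add μ ν g (half_pos hη)
  have hle : superhedge μ ν (f + g) ≤ ∫ x, (φ + φ') x ∂μ + ∫ y, (ψ + ψ') y ∂ν :=
    superhedge_le fun x y => by
      simp only [ContinuousMap.add_apply]
      linarith [hf x y, hg x y]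
  simp only [ContinuousMap.add_apply] at hle
  rw [integral_add (integrable_continuousMap_of_compactSpace φ)
      (integrable_continuousMap_of_compactSpace φ'),
    integral_add (integrable_continuousMap_of_compactSpace ψ)
      (integrable_continuousMap_of_compactSpace ψ')] at hle
  linarith

theorem superhedge_smul_le {a : ℝ} (ha : 0 < a) (f : C(X × Y, ℝ)) :
    superhedge μ ν (a • f) ≤ a * superhedge μ ν f := by
  refine le_of_forall_pos_le_add fun η hη => ?_
  obtain ⟨φ, ψ, hf, hf'⟩ := exists_lt_superhedge_add μ ν f (div_pos hη ha)
  calc superhedge μ ν (a • f) ≤ ∫ x, (a • φ) x ∂μ + ∫ y, (a • ψ) y ∂ν :=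
        superhedge_le fun x y => by
          simp only [ContinuousMap.smul_apply, smul_eq_mul, ← mul_add]
          gcongr
          exact hf x y
    _ = a * (∫ x, φ x ∂μ + ∫ y, ψ y ∂ν) := by
        simp only [ContinuousMap.smul_apply, smul_eq_mul, integral_const_mul, mul_add]
    _ ≤ a * (superhedge μ ν f + η / a) := by gcongr
    _ = a * superhedge μ ν f + η := by field_simp

theorem superhedge_smul {a : ℝ} (ha : 0 < a) (f : C(X × Y, ℝ)) :
    superhedge μ ν (a • f) = a * superhedge μ ν f := by
  refine le_antisymm (superhedge_smul_le ha f) ?_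
  have := superhedge_smul_le (μ := μ) (ν := ν) (inv_pos.2 ha) (a • f)
  rwa [inv_smul_smul₀ ha.ne', ← div_eq_inv_mul, le_div_iff₀' ha] at this

section LinearBelow

variable {L : C(X × Y, ℝ) →ₗ[ℝ] ℝ}

theorem nonneg_of_le_superhedge (hL : ∀ f, L f ≤ superhedge μ ν f) {f : C(X × Y, ℝ)}
    (hf : 0 ≤ f) : 0 ≤ L f := by
  have : superhedge μ ν (-f) ≤ ∫ x, (0 : C(X, ℝ)) x ∂μ + ∫ y, (0 : C(Y, ℝ)) y ∂ν :=
    superhedge_le fun x y => by simpa using hf (x, y)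
  simp only [ContinuousMap.zero_apply, integral_zero, add_zero] at this
  linarith [hL (-f), L.map_neg f]

theorem apply_separable_eq_of_le_superhedge (hL : ∀ f, L f ≤ superhedge μ ν f) (φ : C(X, ℝ))
    (ψ : C(Y, ℝ)) :
    L (φ.comp ContinuousMap.fst + ψ.comp ContinuousMap.snd) = ∫ x, φ x ∂μ + ∫ y, ψ y ∂ν := by
  have hle : ∀ (φ : C(X, ℝ)) (ψ : C(Y, ℝ)),
      L (φ.comp ContinuousMap.fst + ψ.comp ContinuousMap.snd) ≤ ∫ x, φ x ∂μ + ∫ y, ψ y ∂ν :=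
    fun φ ψ => (hL _).trans (superhedge_le fun x y => le_rfl)
  have hneg := hle (-φ) (-ψ)
  rw [ContinuousMap.neg_comp, ContinuousMap.neg_comp, ← neg_add, map_neg] at hneg
  simp only [ContinuousMap.neg_apply, integral_neg] at hneg
  linarith [hle φ ψ]

theorem isCoupling_of_le_superhedge [HasOuterApproxClosed X] [HasOuterApproxClosed Y]
    {γ : Measure (X × Y)} [IsFiniteMeasure γ] (hγ : ∀ f : C(X × Y, ℝ), ∫ p, f p ∂γ = L f)
    (hL : ∀ f, L f ≤ superhedge μ ν f) : IsCoupling γ μ ν where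
  fst_eq := ext_of_forall_integral_eq_of_IsFiniteMeasure fun f => by
    rw [Measure.fst, integral_map measurable_fst.aemeasurable f.continuous.aestronglyMeasurable]
    simpa using (hγ _).trans (apply_separable_eq_of_le_superhedge hL f.toContinuousMap 0)
  snd_eq := ext_of_forall_integral_eq_of_IsFiniteMeasure fun f => by
    rw [Measure.snd, integral_map measurable_snd.aemeasurable f.continuous.aestronglyMeasurable]
    simpa using (hγ _).trans (apply_separable_eq_of_le_superhedge hL 0 f.toContinuousMap)

end LinearBelow

theorem exists_isCoupling_forall_dual_gap_le [T2Space X] [T2Space Y] [HasOuterApproxClosed X]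
    [HasOuterApproxClosed Y] [SecondCountableTopologyEither X Y] (c : C(X × Y, ℝ)) :
    ∃ γ, IsCoupling γ μ ν ∧ ∀ η > 0, ∃ (φ : C(X, ℝ)) (ψ : C(Y, ℝ)),
      (∀ x y, φ x + ψ y ≤ c (x, y)) ∧ ∫ p, c p ∂γ ≤ ∫ x, φ x ∂μ + ∫ y, ψ y ∂ν + η := by
  obtain ⟨L, hL, hLc⟩ := exists_linearMap_le_and_apply_eq
    (fun a ha f => superhedge_smul (μ := μ) (ν := ν) ha f) superhedge_add_le (-c)
  obtain ⟨γ, _, hγ⟩ := exists_measure_integral_eq_of_nonneg L fun f => nonneg_of_le_superhedge hL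
  refine ⟨γ, isCoupling_of_le_superhedge hγ hL, fun η hη => ?_⟩
  obtain ⟨φ, ψ, h, hlt⟩ := exists_lt_superhedge_add μ ν (-c) hη
  refine ⟨-φ, -ψ, fun x y => ?_, ?_⟩
  · have := h x y
    simp only [ContinuousMap.neg_apply] at this ⊢
    linarith
  · simp only [ContinuousMap.neg_apply, integral_neg]
    linarith [hγ c, L.map_neg c]

end Duality

section DualityOnCompacts

variable {α β : Type*}

theorem map_val_comap_val_of_ae_mem [MeasurableSpace α] {μ : Measure α} {s : Set α}
    (hs : MeasurableSet s) (hμs : ∀ᵐ x ∂μ, x ∈ s) :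
    (μ.comap (Subtype.val : s → α)).map Subtype.val = μ := by
  rw [map_comap_subtype_coe hs, Measure.restrict_eq_self_of_ae_mem hμs]

theorem exists_boundedContinuousFunction_extension [MetricSpace α] {s : Set α} [CompactSpace s]
    (φ : C(s, ℝ)) : ∃ Φ : α →ᵇ ℝ, ∀ x : s, Φ x = φ x := by
  obtain ⟨Φ, -, hΦ⟩ := BoundedContinuousFunction.exists_extension_norm_eq_of_isClosedEmbedding
    (BoundedContinuousFunction.mkOfCompact φ)
    (isCompact_iff_compactSpace.2 ‹_›).isClosed.isClosedEmbedding_subtypeVal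
  exact ⟨Φ, fun x => congrFun hΦ x⟩

theorem exists_isCoupling_forall_dual_gap_le_of_isCompact [MetricSpace α] [MeasurableSpace α]
    [BorelSpace α] [MetricSpace β] [MeasurableSpace β] [BorelSpace β] {μ : Measure α}
    {ν : Measure β} [IsProbabilityMeasure μ] [IsProbabilityMeasure ν] {s : Set α} {t : Set β}
    (hs : IsCompact s) (ht : IsCompact t) (hμs : ∀ᵐ x ∂μ, x ∈ s) (hνt : ∀ᵐ y ∂ν, y ∈ t)
    {c : α × β → ℝ} (hc : ContinuousOn c (s ×ˢ t)) :
    ∃ γ, IsCoupling γ μ ν ∧ ∀ η > 0, ∃ (φ : α →ᵇ ℝ) (ψ : β →ᵇ ℝ),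
      (∀ p ∈ s ×ˢ t, φ p.1 + ψ p.2 ≤ c p) ∧
        ∫ p, c p ∂γ ≤ ∫ x, φ x ∂μ + ∫ y, ψ y ∂ν + η := by
  have := isCompact_iff_compactSpace.1 hs
  have := isCompact_iff_compactSpace.1 ht
  set μ' := μ.comap (Subtype.val : s → α)
  set ν' := ν.comap (Subtype.val : t → β)
  have hμ' : μ'.map Subtype.val = μ := map_val_comap_val_of_ae_mem hs.measurableSet hμs
  have hν' : ν'.map Subtype.val = ν := map_val_comap_val_of_ae_mem ht.measurableSet hνt
  have : IsProbabilityMeasure (μ'.map Subtype.val) := hμ' ▸ inferInstance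
  have : IsProbabilityMeasure (ν'.map Subtype.val) := hν' ▸ inferInstance
  have : IsProbabilityMeasure μ' := Measure.isProbabilityMeasure_of_map Subtype.val
  have : IsProbabilityMeasure ν' := Measure.isProbabilityMeasure_of_map Subtype.val
  obtain ⟨γ, hγ, hgap⟩ := exists_isCoupling_forall_dual_gap_le (μ := μ') (ν := ν')
    ⟨fun p : s × t => c (p.1, p.2), hc.comp_continuous (by fun_prop) fun p => ⟨p.1.2, p.2.2⟩⟩
  refine ⟨γ.map (Prod.map Subtype.val Subtype.val), ?_, fun η hη => ?_⟩
  · simpa only [hμ', hν'] using hγ.map_prodMap measurable_subtype_coe measurable_subtype_coe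
  obtain ⟨φ, ψ, h, hle⟩ := hgap η hη
  obtain ⟨Φ, hΦ⟩ := exists_boundedContinuousFunction_extension φ
  obtain ⟨Ψ, hΨ⟩ := exists_boundedContinuousFunction_extension ψ
  refine ⟨Φ, Ψ, ?_, ?_⟩
  · rintro ⟨x, y⟩ ⟨hx, hy⟩
    simpa only [← hΦ, ← hΨ, ContinuousMap.coe_mk] using h ⟨x, hx⟩ ⟨y, hy⟩
  · have es := MeasurableEmbedding.subtype_coe hs.measurableSet
    have et := MeasurableEmbedding.subtype_coe ht.measurableSet
    rw [(es.prodMap et).integral_map, ← hμ', ← hν', es.integral_map, et.integral_map]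
    simpa only [hΦ, hΨ, ContinuousMap.coe_mk, Prod.map_def] using hle

end DualityOnCompacts

section Entropy

variable {Ω : Type*} [MeasurableSpace Ω] {γ q : Measure Ω}

theorem Ent_eq_integral_llr [IsFiniteMeasure γ] [SigmaFinite q] :
    Ent γ q = if γ ≪ q ∧ Integrable (llr γ q) γ then ((∫ x, llr γ q x ∂γ : ℝ) : EReal) else ⊤ := by
  by_cases hγq : γ ≪ q
  · simp only [Ent, integrable_rnDeriv_mul_log_iff hγq, integral_rnDeriv_mul_log hγq]
  · simp only [Ent, hγq, false_and, if_false]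

/-- The Gibbs variational inequality. It is the nonnegativity of the divergence of `γ` from the
Gibbs measure with density proportional to `exp (-F)`. -/
theorem neg_log_sub_integral_le_Ent [IsProbabilityMeasure γ] [IsFiniteMeasure q] {F : Ω → ℝ}
    (hF : Integrable F γ) (hFq : AEMeasurable F q) {Z : ℝ}
    (hZ : ∫⁻ x, ENNReal.ofReal (exp (-F x)) ∂q ≤ ENNReal.ofReal Z) :
    ((-log Z - ∫ x, F x ∂γ : ℝ) : EReal) ≤ Ent γ q := by
  rw [Ent_eq_integral_llr]
  split_ifs with h
  swap
  · exact le_top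
  obtain ⟨hγq, hllr⟩ := h
  have hFneg : Integrable (fun x => -F x) γ := hF.neg
  have : NeZero q := ⟨fun hq => IsProbabilityMeasure.ne_zero γ
    (Measure.absolutelyContinuous_zero_iff.1 (hq ▸ hγq))⟩
  have hexp : Integrable (fun x => exp (-F x)) q := by
    refine ⟨(measurable_exp.comp_aemeasurable hFq.neg).aestronglyMeasurable, ?_⟩
    rw [hasFiniteIntegral_iff_ofReal (ae_of_all _ fun x => (exp_pos _).le)]
    exact hZ.trans_lt ENNReal.ofReal_lt_top
  have := isProbabilityMeasure_tilted hexp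
  have hKL := integral_llr_add_sub_measure_univ_nonneg
    (hγq.trans (absolutelyContinuous_tilted hexp))
    (integrable_llr_tilted_right hγq hFneg hllr hexp)
  have hmass : 0 < ∫ x, exp (-F x) ∂q := integral_exp_pos hexp
  have hlog : log (∫ x, exp (-F x) ∂q) ≤ log Z := by
    refine log_le_log hmass ?_
    rw [← ofReal_integral_eq_lintegral_ofReal hexp (ae_of_all _ fun x => (exp_pos _).le)] at hZ
    exact (ENNReal.ofReal_le_ofReal_iff' .. |>.1 hZ).resolve_right hmass.not_ge
  rw [integral_llr_tilted_right hγq hFneg hexp hllr] at hKL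
  simp only [probReal_univ, integral_neg] at hKL
  exact_mod_cast (by linarith : -log Z - ∫ x, F x ∂γ ≤ ∫ x, llr γ q x ∂γ)

theorem mul_log_le_inv_mul_sq_add {ρ N : ℝ} (hρ : 0 ≤ ρ) (hN : 0 < N) :
    ρ * log ρ ≤ N⁻¹ * (ρ * ρ) + (log N - 1) * ρ := by
  rcases hρ.eq_or_lt with rfl | hρ
  · simp
  · have hlog := log_le_sub_one_of_pos (div_pos hρ hN)
    rw [log_div hρ.ne' hN.ne'] at hlog
    calc ρ * log ρ ≤ ρ * (ρ / N + (log N - 1)) := by gcongr; linarith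
      _ = N⁻¹ * (ρ * ρ) + (log N - 1) * ρ := by ring

theorem Ent_le_log_of_integral_rnDeriv_le [IsProbabilityMeasure γ] [IsFiniteMeasure q]
    (hγq : γ ≪ q) (hργ : Integrable (fun x => (γ.rnDeriv q x).toReal) γ) {N : ℝ} (hN : 0 < N)
    (hργ_le : ∫ x, (γ.rnDeriv q x).toReal ∂γ ≤ N) : Ent γ q ≤ (log N : ℝ) := by
  set ρ : Ω → ℝ := fun x => (γ.rnDeriv q x).toReal with hρ
  have hρm : Measurable ρ := (Measure.measurable_rnDeriv γ q).ennreal_toReal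
  have hρq : Integrable ρ q := Measure.integrable_toReal_rnDeriv
  have hρρ : Integrable (fun x => ρ x * ρ x) q := (integrable_rnDeriv_smul_iff hγq).2 hργ
  have hρρ_eq : ∫ x, ρ x * ρ x ∂q = ∫ x, ρ x ∂γ := integral_rnDeriv_smul hγq
  have hρ_one : ∫ x, ρ x ∂q = 1 := by
    rw [hρ, Measure.integral_toReal_rnDeriv hγq, probReal_univ]
  have hupper := (hρρ.const_mul N⁻¹).add (hρq.const_mul (log N - 1))
  have hle : ∀ x, ρ x * log (ρ x) ≤ N⁻¹ * (ρ x * ρ x) + (log N - 1) * ρ x := fun x =>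
    mul_log_le_inv_mul_sq_add ENNReal.toReal_nonneg hN
  have hint : Integrable (fun x => ρ x * log (ρ x)) q :=
    integrable_of_le_of_le (hρm.mul hρm.log).aestronglyMeasurable
      (ae_of_all _ fun x => by
        have := klFun_nonneg (x := ρ x) ENNReal.toReal_nonneg
        rw [klFun_apply] at this
        change ρ x - 1 ≤ _
        linarith)
      (ae_of_all _ hle) (hρq.sub (integrable_const 1)) hupper
  rw [Ent, if_pos ⟨hγq, hint⟩, EReal.coe_le_coe_iff]
  calc ∫ x, ρ x * log (ρ x) ∂q ≤ ∫ x, (N⁻¹ * (ρ x * ρ x) + (log N - 1) * ρ x) ∂q :=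
        integral_mono hint hupper hle
    _ = N⁻¹ * ∫ x, ρ x ∂γ + (log N - 1) := by
        rw [integral_add (hρρ.const_mul N⁻¹) (hρq.const_mul _), integral_const_mul,
          integral_const_mul, hρρ_eq, hρ_one, mul_one]
    _ ≤ N⁻¹ * N + (log N - 1) := by gcongr
    _ = log N := by rw [inv_mul_cancel₀ hN.ne']; ring

theorem Ent_le_log_of_lintegral_rnDeriv_le [IsProbabilityMeasure γ] [IsFiniteMeasure q]
    (hγq : γ ≪ q) {N : ℝ} (hN : 0 < N) (h : ∫⁻ x, γ.rnDeriv q x ∂γ ≤ ENNReal.ofReal N) :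
    Ent γ q ≤ (log N : ℝ) := by
  have hm : AEMeasurable (γ.rnDeriv q) γ := (Measure.measurable_rnDeriv γ q).aemeasurable
  refine Ent_le_log_of_integral_rnDeriv_le hγq
    (integrable_toReal_of_lintegral_ne_top hm (h.trans_lt ENNReal.ofReal_lt_top).ne) hN ?_
  rw [integral_toReal hm (hγq.ae_le (Measure.rnDeriv_lt_top γ q))]
  exact ENNReal.toReal_le_of_le_ofReal hN.le h

theorem rnDeriv_le_of_le_withDensity [SigmaFinite q] {f : Ω → ℝ≥0∞} (h : γ ≤ q.withDensity f) :
    γ.rnDeriv q ≤ᵐ[q] f := by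
  refine ae_le_of_forall_setLIntegral_le_of_sigmaFinite (γ.measurable_rnDeriv q) fun s hs _ => ?_
  rw [← withDensity_apply f hs]
  exact (Measure.setLIntegral_rnDeriv_le s).trans (h s)

theorem IsCoupling.Ent_le_log_of_le_prod {α β : Type*} [MeasurableSpace α] [MeasurableSpace β]
    {μ : Measure α} {ν : Measure β} [IsProbabilityMeasure μ] [IsProbabilityMeasure ν]
    {γ : Measure (α × β)} (h : IsCoupling γ μ ν) {η : Measure α} [SigmaFinite η] (hη : η ≪ μ)
    (hγ : γ ≤ η.prod ν) {N : ℝ} (hN : 0 < N) (hηN : η univ ≤ ENNReal.ofReal N) :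
    Ent γ (μ.prod ν) ≤ (log N : ℝ) := by
  have := h.isProbabilityMeasure
  have hηm : Measurable (η.rnDeriv μ) := Measure.measurable_rnDeriv η μ
  have hγ' : γ ≤ (μ.prod ν).withDensity fun p => η.rnDeriv μ p.1 := by
    rwa [← prod_withDensity_left hηm, Measure.withDensity_rnDeriv_eq η μ hη]
  have hac : γ ≪ μ.prod ν :=
    (Measure.absolutelyContinuous_of_le hγ').trans (withDensity_absolutelyContinuous _ _)
  refine Ent_le_log_of_lintegral_rnDeriv_le hac hN ?_
  calc ∫⁻ p, γ.rnDeriv (μ.prod ν) p ∂γ ≤ ∫⁻ p, η.rnDeriv μ p.1 ∂γ :=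
        lintegral_mono_ae (hac.ae_le (rnDeriv_le_of_le_withDensity hγ'))
    _ = ∫⁻ x, η.rnDeriv μ x ∂μ := h.measurePreserving_fst.lintegral_comp hηm
    _ ≤ η univ := Measure.lintegral_rnDeriv_le
    _ ≤ ENNReal.ofReal N := hηN

end Entropy

section EntropicCost

theorem le_entCost_of_lintegral_exp_le {α β : Type*} [MeasurableSpace α] [MeasurableSpace β]
    {μ : Measure α} {ν : Measure β} [IsProbabilityMeasure μ] [IsProbabilityMeasure ν]
    {c : α × β → ℝ} (hc : ∀ γ, IsCoupling γ μ ν → Integrable c γ) {φ : α → ℝ} {ψ : β → ℝ}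
    (hφ : Integrable φ μ) (hψ : Integrable ψ ν) {ε Z : ℝ} (hε : 0 < ε)
    (hZ : ∫⁻ p, ENNReal.ofReal (exp (-((c p - (φ p.1 + ψ p.2)) / ε))) ∂(μ.prod ν)
      ≤ ENNReal.ofReal Z) :
    ((∫ x, φ x ∂μ + ∫ y, ψ y ∂ν - ε * log Z : ℝ) : EReal) ≤ entCost μ ν c ε := by
  refine le_entCost_iff.2 fun γ hγ => ?_
  have := hγ.isProbabilityMeasure
  have hF : ∀ θ, IsCoupling θ μ ν → Integrable (fun p => (c p - (φ p.1 + ψ p.2)) / ε) θ :=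
    fun θ hθ => ((hc θ hθ).sub (hθ.integrable_add hφ hψ)).div_const ε
  have hGibbs := neg_log_sub_integral_le_Ent (hF γ hγ) (hF _ isCoupling_prod).aemeasurable hZ
  rw [integral_div, integral_sub (hc γ hγ) (hγ.integrable_add hφ hψ),
    hγ.integral_add hφ hψ] at hGibbs
  calc ((∫ x, φ x ∂μ + ∫ y, ψ y ∂ν - ε * log Z : ℝ) : EReal)
      = (∫ p, c p ∂γ : ℝ) + (ε : EReal) *
          ((-log Z - (∫ p, c p ∂γ - (∫ x, φ x ∂μ + ∫ y, ψ y ∂ν)) / ε : ℝ) : EReal) := by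
        norm_cast
        field_simp
        ring
    _ ≤ _ := by gcongr

variable {α β : Type*} [MetricSpace α] [MeasurableSpace α] [BorelSpace α] [MetricSpace β]
  [MeasurableSpace β] [BorelSpace β] [OpensMeasurableSpace (α × β)] {μ : Measure α} {ν : Measure β}
  [IsProbabilityMeasure μ] [IsProbabilityMeasure ν] {s : Set α} {t : Set β} {c : α × β → ℝ}

theorem exists_isCoupling_entCost_zero_eq (hs : IsCompact s) (ht : IsCompact t)
    (hμs : ∀ᵐ x ∂μ, x ∈ s) (hνt : ∀ᵐ y ∂ν, y ∈ t) (hc : ContinuousOn c (s ×ˢ t)) :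
    ∃ γ, IsCoupling γ μ ν ∧ entCost μ ν c 0 = (∫ p, c p ∂γ : ℝ) ∧
      ∀ η > 0, ∃ (φ : α →ᵇ ℝ) (ψ : β →ᵇ ℝ), (∀ p ∈ s ×ˢ t, φ p.1 + ψ p.2 ≤ c p) ∧
        ∫ p, c p ∂γ ≤ ∫ x, φ x ∂μ + ∫ y, ψ y ∂ν + η := by
  obtain ⟨γ, hγ, hgap⟩ := exists_isCoupling_forall_dual_gap_le_of_isCompact hs ht hμs hνt hc
  refine ⟨γ, hγ, le_antisymm ?_ (le_entCost_iff.2 fun θ hθ => ?_), hgap⟩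
  · simpa using entCost_le hγ c 0
  suffices h : ∫ p, c p ∂γ ≤ ∫ p, c p ∂θ by simpa using h
  have := hθ.isProbabilityMeasure
  refine le_of_forall_pos_le_add fun η hη => ?_
  obtain ⟨φ, ψ, h, hle⟩ := hgap η hη
  have hφ := φ.integrable μ
  have hψ := ψ.integrable ν
  calc ∫ p, c p ∂γ ≤ ∫ p, (φ p.1 + ψ p.2) ∂θ + η := by rwa [hθ.integral_add hφ hψ]
    _ ≤ ∫ p, c p ∂θ + η := add_le_add (integral_mono_ae (hθ.integrable_add hφ hψ)
        (hθ.integrable_of_continuousOn hs ht hμs hνt hc)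
        ((hθ.ae_mem_prod hμs hνt).mono h)) le_rfl

end EntropicCost

section CrossDifference

/-- The cross difference of a cost: what is lost when `p` and `p'` keep their second coordinates
instead of exchanging them. To leading order it is given by the mixed second derivative of `c`. -/
def crossDifference {α β : Type*} (c : α × β → ℝ) (p p' : α × β) : ℝ :=
  c p + c p' - c (p.1, p'.2) - c (p'.1, p.2)

variable {α β : Type*} [MeasurableSpace α] [MeasurableSpace β] {θ : Measure (α × β)}
  [IsProbabilityMeasure θ] {c : α × β → ℝ}

theorem integral_comp_of_measurePreserving {μ : Measure α} {ν : Measure β} {f : α → β}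
    (hf : MeasurePreserving f μ ν) {g : β → ℝ} (hg : AEStronglyMeasurable g ν) :
    ∫ x, (g ∘ f) x ∂μ = ∫ y, g y ∂ν := by
  rw [← hf.map_eq, integral_map hf.aemeasurable (hf.map_eq ▸ hg)]
  rfl

theorem measurePreserving_fst_fst_snd_snd :
    MeasurePreserving (fun z : (α × β) × α × β => (z.1.1, z.2.2)) (θ.prod θ)
      (θ.fst.prod θ.snd) :=
  MeasurePreserving.prod (f := Prod.fst) (g := Prod.snd) ⟨measurable_fst, rfl⟩
    ⟨measurable_snd, rfl⟩

theorem integrable_crossDifference (hc : Integrable c θ)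
    (hc' : Integrable c (θ.fst.prod θ.snd)) :
    Integrable (fun z => crossDifference c z.1 z.2) (θ.prod θ) := by
  have h : MeasurePreserving _ (θ.prod θ) (θ.fst.prod θ.snd) := measurePreserving_fst_fst_snd_snd
  exact (((measurePreserving_fst.integrable_comp_of_integrable hc).add
    (measurePreserving_snd.integrable_comp_of_integrable hc)).sub
    (h.integrable_comp_of_integrable hc')).sub
    ((h.comp Measure.measurePreserving_swap).integrable_comp_of_integrable hc')

theorem integral_crossDifference (hc : Integrable c θ) (hc' : Integrable c (θ.fst.prod θ.snd)) :
    ∫ z, crossDifference c z.1 z.2 ∂(θ.prod θ) =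
      2 * (∫ p, c p ∂θ - ∫ p, c p ∂(θ.fst.prod θ.snd)) := by
  have h₁ : MeasurePreserving Prod.fst (θ.prod θ) θ := measurePreserving_fst
  have h₂ : MeasurePreserving Prod.snd (θ.prod θ) θ := measurePreserving_snd
  have h₃ : MeasurePreserving _ (θ.prod θ) (θ.fst.prod θ.snd) := measurePreserving_fst_fst_snd_snd
  have h₄ := h₃.comp Measure.measurePreserving_swap
  have hi₁ := h₁.integrable_comp_of_integrable hc
  have hi₂ := h₂.integrable_comp_of_integrable hc
  have hi₃ := h₃.integrable_comp_of_integrable hc'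
  have hi₄ := h₄.integrable_comp_of_integrable hc'
  refine (integral_sub' ((hi₁.add hi₂).sub hi₃) hi₄).trans ?_
  rw [integral_sub' (hi₁.add hi₂) hi₃, integral_add' hi₁ hi₂,
    integral_comp_of_measurePreserving h₁ hc.1, integral_comp_of_measurePreserving h₂ hc.1,
    integral_comp_of_measurePreserving h₃ hc'.1, integral_comp_of_measurePreserving h₄ hc'.1]
  ring

theorem integral_prod_marginals_le (hc : Integrable c θ) (hc' : Integrable c (θ.fst.prod θ.snd))
    {S : Set (α × β)} (hS : ∀ᵐ p ∂θ, p ∈ S) {Δ : ℝ}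
    (hΔ : ∀ p ∈ S, ∀ p' ∈ S, -(2 * Δ) ≤ crossDifference c p p') :
    ∫ p, c p ∂(θ.fst.prod θ.snd) ≤ ∫ p, c p ∂θ + Δ := by
  have h : ∫ _, -(2 * Δ) ∂(θ.prod θ) ≤ ∫ z, crossDifference c z.1 z.2 ∂(θ.prod θ) := by
    refine integral_mono_ae (integrable_const _) (integrable_crossDifference hc hc') ?_
    filter_upwards [Measure.quasiMeasurePreserving_fst.ae hS,
      Measure.quasiMeasurePreserving_snd.ae hS] with z hz₁ hz₂ using hΔ _ hz₁ _ hz₂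
  rw [integral_crossDifference hc hc', integral_const, probReal_univ, one_smul] at h
  linarith

end CrossDifference

section BlockApprox

variable {α β J : Type*} [MeasurableSpace α] [MeasurableSpace β] [Fintype J]

/-- The block approximation of `γ` (Carlier–Duval–Peyré–Schmitzer): on each cell `κ = j` of a finite
partition, `γ` is replaced by the product measure with the same mass and the same marginals. -/
def blockApprox (γ : Measure (α × β)) (κ : α × β → J) : Measure (α × β) :=
  ∑ j, γ (κ ⁻¹' {j}) • (γ[|κ ← j]).fst.prod (γ[|κ ← j]).snd

theorem fst_sum_smul (a : J → ℝ≥0∞) (m : J → Measure (α × β)) :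
    (∑ j, a j • m j).fst = ∑ j, a j • (m j).fst := by
  rw [← Measure.sum_fintype, Measure.fst_sum, Measure.sum_fintype]
  simp only [Measure.fst, Measure.map_smul]

theorem snd_sum_smul (a : J → ℝ≥0∞) (m : J → Measure (α × β)) :
    (∑ j, a j • m j).snd = ∑ j, a j • (m j).snd := by
  rw [← Measure.sum_fintype, Measure.snd_sum, Measure.sum_fintype]
  simp only [Measure.snd, Measure.map_smul]

theorem isCoupling_prod_marginals (θ : Measure (α × β)) [IsZeroOrProbabilityMeasure θ] :
    IsCoupling (θ.fst.prod θ.snd) θ.fst θ.snd := by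
  rcases eq_zero_or_isProbabilityMeasure θ with rfl | h
  · simpa using IsCoupling.mk (γ := (0 : Measure (α × β))) Measure.fst_zero Measure.snd_zero
  · exact isCoupling_prod

variable [MeasurableSpace J] [DiscreteMeasurableSpace J] {γ : Measure (α × β)} {κ : α × β → J}

theorem isCoupling_blockApprox [IsFiniteMeasure γ] (hκ : Measurable κ) :
    IsCoupling (blockApprox γ κ) γ.fst γ.snd where
  fst_eq := by
    conv_rhs => rw [← sum_meas_smul_cond_fiber hκ γ]
    simp only [blockApprox, fst_sum_smul, (isCoupling_prod_marginals _).fst_eq]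
  snd_eq := by
    conv_rhs => rw [← sum_meas_smul_cond_fiber hκ γ]
    simp only [blockApprox, snd_sum_smul, (isCoupling_prod_marginals _).snd_eq]

/-- Bounding the second factor of every block by `γ.snd` costs nothing in the entropy estimate. -/
theorem blockApprox_le_prod [IsFiniteMeasure γ] (hκ : Measurable κ) :
    blockApprox γ κ ≤ (∑ j, (γ[|κ ← j]).fst).prod γ.snd := by
  have hle (j : J) : γ (κ ⁻¹' {j}) • (γ[|κ ← j]).snd ≤ γ.snd := by
    conv_rhs => rw [← sum_meas_smul_cond_fiber hκ γ, snd_sum_smul, ← Measure.sum_fintype]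
    exact Measure.le_sum _ j
  rw [← Measure.sum_fintype, Measure.prod_sum_left, Measure.sum_fintype]
  refine Finset.sum_le_sum fun j _ => ?_
  rw [← Measure.prod_smul_right]
  exact Measure.prod_mono le_rfl (hle j)

theorem Ent_blockApprox_le [IsProbabilityMeasure γ] (hκ : Measurable κ) :
    Ent (blockApprox γ κ) (γ.fst.prod γ.snd) ≤ (log (Fintype.card J) : ℝ) := by
  have : Nonempty J := (nonempty_of_isProbabilityMeasure γ).map κ
  refine (isCoupling_blockApprox hκ).Ent_le_log_of_le_prod ?_ (blockApprox_le_prod hκ)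
    (Nat.cast_pos.2 Fintype.card_pos) ?_
  · rw [← Measure.sum_fintype]
    exact Measure.absolutelyContinuous_sum_left fun j =>
      cond_absolutelyContinuous.map measurable_fst
  · rw [Measure.coe_finsetSum, Finset.sum_apply, ENNReal.ofReal_natCast, ← Finset.card_univ,
      ← nsmul_one]
    exact Finset.sum_le_card_nsmul _ _ _ fun j _ => by
      rw [Measure.fst_univ]
      exact prob_le_one

theorem integral_blockApprox_le [IsProbabilityMeasure γ] (hκ : Measurable κ) {c : α × β → ℝ}
    (hc : Integrable c γ) (hc' : Integrable c (blockApprox γ κ)) {S : Set (α × β)}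
    (hS : ∀ᵐ p ∂γ, p ∈ S) {Δ : ℝ}
    (hΔ : ∀ p ∈ S, ∀ p' ∈ S, κ p = κ p' → -(2 * Δ) ≤ crossDifference c p p') :
    ∫ p, c p ∂(blockApprox γ κ) ≤ ∫ p, c p ∂γ + Δ := by
  have hγ := sum_meas_smul_cond_fiber hκ γ
  have hone : ∑ j, γ.real (κ ⁻¹' {j}) = 1 := by
    rw [sum_measureReal_preimage_singleton _ fun j _ => hκ (.singleton j)]
    simp
  have hint : ∀ j, Integrable c (γ (κ ⁻¹' {j}) • γ[|κ ← j]) := by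
    rw [← hγ] at hc
    simpa using integrable_finsetSum_measure.1 hc
  have hint' : ∀ j, Integrable c
      (γ (κ ⁻¹' {j}) • (γ[|κ ← j]).fst.prod (γ[|κ ← j]).snd) := by
    simpa using integrable_finsetSum_measure.1 hc'
  have hblock (j : J) : γ.real (κ ⁻¹' {j}) * ∫ p, c p ∂((γ[|κ ← j]).fst.prod (γ[|κ ← j]).snd) ≤
      γ.real (κ ⁻¹' {j}) * (∫ p, c p ∂(γ[|κ ← j]) + Δ) := by
    rcases eq_or_ne (γ (κ ⁻¹' {j})) 0 with h | h
    · simp [measureReal_def, h]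
    have := cond_isProbabilityMeasure h
    have hcell : ∀ᵐ p ∂(γ[|κ ← j]), p ∈ S ∩ κ ⁻¹' {j} := by
      filter_upwards [cond_absolutelyContinuous.ae_le hS, ae_cond_mem (hκ (.singleton j))]
        with p hp hpj using ⟨hp, hpj⟩
    exact mul_le_mul_of_nonneg_left (integral_prod_marginals_le
      ((integrable_smul_measure h (measure_ne_top _ _)).1 (hint j))
      ((integrable_smul_measure h (measure_ne_top _ _)).1 (hint' j)) hcell
      fun p hp p' hp' => hΔ p hp.1 p' hp'.1 (hp.2.trans hp'.2.symm)) measureReal_nonneg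
  calc ∫ p, c p ∂(blockApprox γ κ)
      = ∑ j, γ.real (κ ⁻¹' {j}) * ∫ p, c p ∂((γ[|κ ← j]).fst.prod (γ[|κ ← j]).snd) := by
        rw [blockApprox, integral_finsetSum_measure fun j _ => hint' j]
        simp only [integral_smul_measure, measureReal_def, smul_eq_mul]
    _ ≤ ∑ j, γ.real (κ ⁻¹' {j}) * (∫ p, c p ∂(γ[|κ ← j]) + Δ) :=
        Finset.sum_le_sum fun j _ => hblock j
    _ = ∫ p, c p ∂(∑ j, γ (κ ⁻¹' {j}) • γ[|κ ← j]) + Δ := by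
        rw [integral_finsetSum_measure fun j _ => hint j]
        simp only [mul_add, Finset.sum_add_distrib, ← Finset.sum_mul, integral_smul_measure,
          smul_eq_mul, ← measureReal_def, hone, one_mul]
    _ = ∫ p, c p ∂γ + Δ := by rw [hγ]

end BlockApprox

section MixedHessian

variable {E F : Type*} [NormedAddCommGroup E] [NormedSpace ℝ E] [NormedAddCommGroup F]
  [NormedSpace ℝ F] {c : E × F → ℝ} {p₀ : E × F}

/-- The mixed second derivative of `c`, as a map from `F` to the dual of `E`. It is the
coordinate-free form of the matrix `∇²ₓᵧ c`. -/
def mixedHessian (c : E × F → ℝ) (p : E × F) : F →L[ℝ] StrongDual ℝ E :=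
  (ContinuousLinearMap.inl ℝ E F).precomp ℝ ∘L fderiv ℝ (fderiv ℝ c) p ∘L
    ContinuousLinearMap.inr ℝ E F

theorem mixedHessian_apply (c : E × F → ℝ) (p : E × F) (k : F) (h : E) :
    mixedHessian c p k h = fderiv ℝ (fderiv ℝ c) p (0, k) (h, 0) :=
  rfl

theorem mixedHessian_apply_eq_comp (c : E × F → ℝ) (p : E × F) (k : F) :
    mixedHessian c p k = fderiv ℝ (fderiv ℝ c) p (0, k) ∘L ContinuousLinearMap.inl ℝ E F :=
  rfl

theorem eventually_differentiableAt_of_contDiffAt_two (hc : ContDiffAt ℝ 2 c p₀) :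
    ∀ᶠ p in 𝓝 p₀, DifferentiableAt ℝ c p :=
  (hc.eventually (by simp)).mono fun _ hp => hp.differentiableAt two_ne_zero

theorem abs_crossDifference_sub_le {s : Set E} (hs : Convex ℝ s) {x x' : E} (hx : x ∈ s)
    (hx' : x' ∈ s) {y y' : F} (hy : ∀ u ∈ s, DifferentiableAt ℝ c (u, y))
    (hy' : ∀ u ∈ s, DifferentiableAt ℝ c (u, y')) {L : StrongDual ℝ E} {C : ℝ}
    (hL : ∀ u ∈ s, ‖(fderiv ℝ c (u, y) - fderiv ℝ c (u, y')) ∘L ContinuousLinearMap.inl ℝ E F - L‖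
      ≤ C) :
    |crossDifference c (x, y) (x', y') - L (x - x')| ≤ C * ‖x - x'‖ := by
  have hderiv : ∀ u ∈ s, HasFDerivWithinAt (fun u => c (u, y) - c (u, y'))
      ((fderiv ℝ c (u, y) - fderiv ℝ c (u, y')) ∘L ContinuousLinearMap.inl ℝ E F) s u :=
    fun u hu => (((hy u hu).hasFDerivAt.comp u (hasFDerivAt_prodMk_left u y)).sub
      ((hy' u hu).hasFDerivAt.comp u (hasFDerivAt_prodMk_left u y'))).hasFDerivWithinAt
  convert! hs.norm_image_sub_le_of_norm_hasFDerivWithin_le' hderiv hL hx' hx using 3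
  simp only [crossDifference]
  ring

theorem isLittleO_crossDifference_sub_mixedHessian (hc : ContDiffAt ℝ 2 c p₀) :
    (fun z : (E × F) × E × F =>
        crossDifference c z.1 z.2 - mixedHessian c p₀ (z.1.2 - z.2.2) (z.1.1 - z.2.1))
      =o[𝓝 (p₀, p₀)] fun z => ‖z.1.1 - z.2.1‖ * ‖z.1.2 - z.2.2‖ := by
  have hstrict : HasStrictFDerivAt (fderiv ℝ c) (fderiv ℝ (fderiv ℝ c) p₀) p₀ :=
    (hc.fderiv_right (m := 1) le_rfl).hasStrictFDerivAt one_ne_zero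
  refine Asymptotics.isLittleO_iff.2 fun η hη => ?_
  obtain ⟨r, hr, hball⟩ := Metric.eventually_nhds_iff_ball.1
    (((eventually_differentiableAt_of_contDiffAt_two hc).prod_nhds
      (eventually_differentiableAt_of_contDiffAt_two hc)).and (hstrict.isLittleO.def hη))
  filter_upwards [Metric.ball_mem_nhds (p₀, p₀) hr]
  rintro ⟨⟨x, y⟩, x', y'⟩ hz
  rw [← ball_prod_same, ← ball_prod_same p₀.1 p₀.2] at hz
  obtain ⟨⟨hx, hy⟩, hx', hy'⟩ := hz
  have hmem (u : E) (hu : u ∈ Metric.ball p₀.1 r) :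
      ((u, y), (u, y')) ∈ Metric.ball (p₀, p₀) r := by
    rw [← ball_prod_same, ← ball_prod_same p₀.1 p₀.2]
    exact ⟨⟨hu, hy⟩, hu, hy'⟩
  have hbound : ∀ u ∈ Metric.ball p₀.1 r,
      ‖(fderiv ℝ c (u, y) - fderiv ℝ c (u, y')) ∘L ContinuousLinearMap.inl ℝ E F -
        mixedHessian c p₀ (y - y')‖ ≤ η * ‖y - y'‖ := fun u hu => by
    have h := (hball _ (hmem u hu)).2
    rw [Prod.mk_sub_mk, sub_self, Prod.norm_mk, norm_zero, max_eq_right (norm_nonneg _)] at h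
    rw [mixedHessian_apply_eq_comp, ← ContinuousLinearMap.sub_comp]
    exact (ContinuousLinearMap.opNorm_comp_le _ _).trans ((mul_le_of_le_one_right (norm_nonneg _)
      (ContinuousLinearMap.norm_inl_le_one ℝ E F)).trans h)
  have key := abs_crossDifference_sub_le (convex_ball p₀.1 r) hx hx'
    (fun u hu => (hball _ (hmem u hu)).1.1) (fun u hu => (hball _ (hmem u hu)).1.2) hbound
  rw [norm_mul, norm_norm, norm_norm, norm_eq_abs, mul_comm ‖x - x'‖, ← mul_assoc]
  exact key

end MixedHessian

section Twist

variable {E F : Type*} [NormedAddCommGroup E] [InnerProductSpace ℝ E] [NormedAddCommGroup F]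
  [NormedSpace ℝ F] {c : E × F → ℝ} {A : F ≃L[ℝ] E} {S K : Set (E × F)}

/-- On `S`, the cost `c` is a small perturbation of the bilinear cost `⟪x, A y⟫`, as far as
cross differences are concerned. -/
def IsTwistedOn (c : E × F → ℝ) (A : F ≃L[ℝ] E) (S : Set (E × F)) : Prop :=
  ∀ p ∈ S, ∀ p' ∈ S, |crossDifference c p p' - inner ℝ (p.1 - p'.1) (A (p.2 - p'.2))| ≤
    1 / 2 * (‖p.1 - p'.1‖ * ‖A (p.2 - p'.2)‖)

theorem IsTwistedOn.mono {S' : Set (E × F)} (h : IsTwistedOn c A S) (hS : S' ⊆ S) :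
    IsTwistedOn c A S' :=
  fun p hp p' hp' => h p (hS hp) p' (hS hp')

theorem exists_inner_eq_mixedHessian [CompleteSpace E] {p₀ : E × F}
    (h : (mixedHessian c p₀).IsInvertible) :
    ∃ A : F ≃L[ℝ] E, ∀ x y, inner ℝ x (A y) = mixedHessian c p₀ y x := by
  obtain ⟨B, hB⟩ := h
  refine ⟨B.trans (InnerProductSpace.toDual ℝ E).symm.toContinuousLinearEquiv, fun x y => ?_⟩
  rw [real_inner_comm, ← hB]
  exact InnerProductSpace.toDual_symm_apply

theorem exists_isOpen_isTwistedOn [CompleteSpace E] {p₀ : E × F} (hc : ContDiffAt ℝ 2 c p₀)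
    (h : (mixedHessian c p₀).IsInvertible) :
    ∃ (A : F ≃L[ℝ] E) (U : Set (E × F)), IsOpen U ∧ p₀ ∈ U ∧ IsTwistedOn c A U := by
  obtain ⟨A, hA⟩ := exists_inner_eq_mixedHessian h
  have hbigO : (fun z : (E × F) × E × F => ‖z.1.1 - z.2.1‖ * ‖z.1.2 - z.2.2‖) =O[𝓝 (p₀, p₀)]
      fun z => ‖z.1.1 - z.2.1‖ * ‖A (z.1.2 - z.2.2)‖ :=
    (Asymptotics.isBigO_refl _ _).mul (A.isBigO_comp_rev _ _).norm_norm
  have hev := ((isLittleO_crossDifference_sub_mixedHessian hc).trans_isBigO hbigO).def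
    one_half_pos
  rw [nhds_prod_eq, eventually_prod_self_iff'] at hev
  obtain ⟨V, hV, hVtwist⟩ := hev
  obtain ⟨U, hUV, hU, hp₀⟩ := mem_nhds_iff.1 hV
  refine ⟨A, U, hU, hp₀, fun p hp p' hp' => ?_⟩
  rw [hA]
  simpa only [norm_mul, norm_norm, ← norm_eq_abs] using hVtwist p (hUV hp) p' (hUV hp')

theorem exists_measurable_selection {X ι : Type*} [MeasurableSpace X] [Finite ι] [Nonempty ι]
    [MeasurableSpace ι] {U : ι → Set X} (hU : ∀ i, MeasurableSet (U i)) :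
    ∃ κ : X → ι, Measurable κ ∧ ∀ x ∈ ⋃ i, U i, x ∈ U (κ x) := by
  cases nonempty_fintype ι
  suffices h : ∀ F : Finset ι, ∃ κ : X → ι, Measurable κ ∧ ∀ x ∈ ⋃ i ∈ F, U i, x ∈ U (κ x) by
    simpa using h Finset.univ
  intro F
  induction F using Finset.induction_on with
  | empty => exact ⟨fun _ => Classical.arbitrary ι, measurable_const, by simp⟩
  | insert i F _ ih =>
    obtain ⟨κ, hκ, h⟩ := ih
    refine ⟨fun x => if x ∈ U i then i else κ x, .ite (hU i) measurable_const hκ, fun x hx => ?_⟩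
    rw [Finset.set_biUnion_insert] at hx
    by_cases hxi : x ∈ U i
    · simpa only [if_pos hxi]
    · simpa only [if_neg hxi] using h x (hx.resolve_left hxi)

theorem exists_measurable_isTwistedOn [CompleteSpace E] [MeasurableSpace E] [MeasurableSpace F]
    [OpensMeasurableSpace (E × F)] (hK : IsCompact K) (hK₀ : K.Nonempty)
    (hc : ∀ p ∈ K, ContDiffAt ℝ 2 c p) (h : ∀ p ∈ K, (mixedHessian c p).IsInvertible) :
    ∃ (T : Finset K) (κ : E × F → T) (A : T → F ≃L[ℝ] E), Measurable κ ∧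
      ∀ i, IsTwistedOn c (A i) (K ∩ κ ⁻¹' {i}) := by
  choose A U hUo hU hAU using fun p : K => exists_isOpen_isTwistedOn (hc p p.2) (h p p.2)
  obtain ⟨T, hT⟩ := hK.elim_nhds_subcover' (fun p hp => U ⟨p, hp⟩)
    fun p hp => (hUo _).mem_nhds (hU ⟨p, hp⟩)
  obtain ⟨p, hp⟩ := hK₀
  have : Nonempty T := by
    obtain ⟨q, hq, -⟩ := mem_iUnion₂.1 (hT hp)
    exact ⟨⟨q, hq⟩⟩
  obtain ⟨κ, hκ, hκU⟩ := exists_measurable_selection fun i : T => (hUo i).measurableSet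
  refine ⟨T, κ, fun i => A i, hκ, fun i => (hAU i).mono ?_⟩
  rintro q ⟨hq, rfl⟩
  obtain ⟨j, hj, hqj⟩ := mem_iUnion₂.1 (hT hq)
  exact hκU q (mem_iUnion.2 ⟨⟨j, hj⟩, hqj⟩)

end Twist

section CrossDeriv

variable {d : ℕ} {c : EuclideanSpace ℝ (Fin d) × EuclideanSpace ℝ (Fin d) → ℝ}
  {x y : EuclideanSpace ℝ (Fin d)}

theorem crossDeriv_apply (hc : ContDiffAt ℝ 2 c (x, y)) (i j : Fin d) :
    crossDeriv c x y i j =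
      mixedHessian c (x, y) (EuclideanSpace.single j 1) (EuclideanSpace.single i 1) := by
  have hgrad : (fun y' => fderiv ℝ (fun x' => c (x', y')) x (EuclideanSpace.single i 1))
      =ᶠ[𝓝 y] fun y' => fderiv ℝ c (x, y') (EuclideanSpace.single i 1, 0) := by
    filter_upwards [(Continuous.prodMk_right x).continuousAt.eventually
      (eventually_differentiableAt_of_contDiffAt_two hc)] with y' hy'
    have hpartial : HasFDerivAt (fun x' => c (x', y')) _ x :=
      hy'.hasFDerivAt.comp x (hasFDerivAt_prodMk_left x y')
    rw [hpartial.fderiv]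
    rfl
  have hmixed : HasFDerivAt (fun y' => fderiv ℝ c (x, y')) _ y :=
    ((hc.fderiv_right (m := 1) le_rfl).differentiableAt one_ne_zero).hasFDerivAt.comp y
      (hasFDerivAt_prodMk_right x y)
  rw [crossDeriv, Matrix.of_apply, hgrad.fderiv_eq,
    (hmixed.clm_apply (hasFDerivAt_const _ y)).fderiv]
  simp [mixedHessian_apply]

theorem mixedHessian_apply_single (hc : ContDiffAt ℝ 2 c (x, y)) (k : EuclideanSpace ℝ (Fin d))
    (i : Fin d) :
    mixedHessian c (x, y) k (EuclideanSpace.single i 1) = (crossDeriv c x y).mulVec k i := by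
  conv_lhs => rw [← (EuclideanSpace.basisFun (Fin d) ℝ).sum_repr k]
  simp [Matrix.mulVec, dotProduct, crossDeriv_apply hc, mul_comm]

theorem isInvertible_mixedHessian (hc : ContDiffAt ℝ 2 c (x, y)) (h : (crossDeriv c x y).det ≠ 0) :
    (mixedHessian c (x, y)).IsInvertible := by
  have hinj : Function.Injective (mixedHessian c (x, y)).toLinearMap := by
    refine (injective_iff_map_eq_zero _).2 fun k hk => ?_
    have hmulVec : (crossDeriv c x y).mulVec k = 0 := funext fun i => by
      rw [← mixedHessian_apply_single hc]
      exact DFunLike.congr_fun hk (EuclideanSpace.single i 1)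
    exact (WithLp.ofLp_eq_zero 2).1 (Matrix.eq_zero_of_mulVec_eq_zero h hmulVec)
  have hrank : Module.finrank ℝ (EuclideanSpace ℝ (Fin d)) =
      Module.finrank ℝ (StrongDual ℝ (EuclideanSpace ℝ (Fin d))) :=
    (InnerProductSpace.toDual ℝ (EuclideanSpace ℝ (Fin d))).toLinearEquiv.finrank_eq
  exact ⟨(LinearEquiv.ofInjectiveOfFinrankEq _ hinj hrank).toContinuousLinearEquiv, rfl⟩

end CrossDeriv

section Grid

theorem exists_measurable_fin_abs_sub_le {R δ : ℝ} (hR : 0 ≤ R) (hδ : 0 < δ) (hδ₁ : δ ≤ 1) :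
    ∃ m : ℕ, 0 < m ∧ (m : ℝ) ≤ (2 * R + 1) / δ ∧ ∃ f : ℝ → Fin m, Measurable f ∧
      ∀ a b, |a| ≤ R → |b| ≤ R → f a = f b → |a - b| ≤ δ := by
  set m := ⌊2 * R / δ⌋₊ + 1 with hm
  have hfloor : ∀ a, |a| ≤ R → ⌊(a + R) / δ⌋₊ < m := fun a ha => by
    refine Nat.lt_succ_of_le (Nat.floor_mono ?_)
    gcongr
    linarith [le_of_abs_le ha]
  refine ⟨m, Nat.succ_pos _, ?_, fun a => Fin.ofNat m ⌊(a + R) / δ⌋₊, ?_, fun a b ha hb hab => ?_⟩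
  · calc (m : ℝ) ≤ 2 * R / δ + 1 / δ := by
          rw [hm, Nat.cast_add_one]
          exact add_le_add (Nat.floor_le (by positivity)) (one_le_one_div hδ hδ₁)
      _ = (2 * R + 1) / δ := (add_div ..).symm
  · exact (measurable_from_nat (f := Fin.ofNat m)).comp (Nat.measurable_floor.comp (by fun_prop))
  · have hnonneg : ∀ a, |a| ≤ R → 0 ≤ (a + R) / δ := fun a ha =>
      div_nonneg (by linarith [neg_le_of_abs_le ha]) hδ.le
    have hfab : ⌊(a + R) / δ⌋₊ = ⌊(b + R) / δ⌋₊ := by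
      simpa only [Fin.ext_iff, Fin.val_ofNat, Nat.mod_eq_of_lt (hfloor _ ha),
        Nat.mod_eq_of_lt (hfloor _ hb)] using hab
    have h : |(a + R) / δ - (b + R) / δ| < 1 := Int.abs_sub_lt_one_of_floor_eq_floor <| by
      rw [← Int.natCast_floor_eq_floor (hnonneg a ha), hfab,
        Int.natCast_floor_eq_floor (hnonneg b hb)]
    rw [← sub_div, add_sub_add_right_eq_sub, abs_div, abs_of_pos hδ, div_lt_one hδ] at h
    exact h.le

theorem log_card_prod_fun_le {ι : Type*} [Fintype ι] [Nonempty ι] {d m : ℕ} {a δ : ℝ}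
    (hm : 0 < m) (ha : 0 < a) (hδ : 0 < δ) (hma : (m : ℝ) ≤ a / δ) :
    log (Fintype.card (ι × (Fin d → Fin m))) ≤
      log (Fintype.card ι) + d * (log a + log (1 / δ)) := by
  have : (0 : ℝ) < m := Nat.cast_pos.2 hm
  rw [Fintype.card_prod, Fintype.card_fun, Fintype.card_fin, Fintype.card_fin, Nat.cast_mul,
    Nat.cast_pow, log_mul (Nat.cast_ne_zero.2 Fintype.card_ne_zero) (by positivity), log_pow,
    ← log_mul ha.ne' (by positivity), mul_one_div]
  gcongr

variable {E : Type*} [NormedAddCommGroup E] [InnerProductSpace ℝ E] [FiniteDimensional ℝ E]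
  [MeasurableSpace E] [OpensMeasurableSpace E]

theorem exists_measurable_norm_sub_sq_le {R δ : ℝ} (hR : 0 ≤ R) (hδ : 0 < δ) (hδ₁ : δ ≤ 1) :
    ∃ m : ℕ, 0 < m ∧ (m : ℝ) ≤ (2 * R + 1) / δ ∧
      ∃ f : E → Fin (Module.finrank ℝ E) → Fin m, Measurable f ∧
        ∀ x x', ‖x‖ ≤ R → ‖x'‖ ≤ R → f x = f x' → ‖x - x'‖ ^ 2 ≤ Module.finrank ℝ E * δ ^ 2 := by
  obtain ⟨m, hm, hmR, f, hf, hfδ⟩ := exists_measurable_fin_abs_sub_le hR hδ hδ₁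
  set b := stdOrthonormalBasis ℝ E
  have hb : ∀ i x, |inner ℝ (b i) x| ≤ ‖x‖ := fun i x => by
    simpa using abs_real_inner_le_norm (b i) x
  refine ⟨m, hm, hmR, fun x i => f (inner ℝ (b i) x), ?_, fun x x' hx hx' h => ?_⟩
  · exact measurable_pi_lambda _ fun i => hf.comp (by fun_prop : Continuous _).measurable
  calc ‖x - x'‖ ^ 2 = ∑ i, |inner ℝ (b i) x - inner ℝ (b i) x'| ^ 2 := by
        rw [← b.sum_sq_norm_inner_right]
        simp only [inner_sub_right, norm_eq_abs]
    _ ≤ ∑ i, δ ^ 2 := by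
        gcongr with i
        exact hfδ _ _ ((hb i x).trans hx) ((hb i x').trans hx') (congrFun h i)
    _ = Module.finrank ℝ E * δ ^ 2 := by simp

end Grid

section UpperBound

theorem IsCoupling.entCost_le_add_log_card {α β J : Type*} [MeasurableSpace α] [MeasurableSpace β]
    [Fintype J] [MeasurableSpace J] [DiscreteMeasurableSpace J] {μ : Measure α} {ν : Measure β}
    [IsProbabilityMeasure μ] {γ : Measure (α × β)} (hγ : IsCoupling γ μ ν) {c : α × β → ℝ}
    (hc : ∀ θ, IsCoupling θ μ ν → Integrable c θ) {S : Set (α × β)} (hS : ∀ᵐ p ∂γ, p ∈ S)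
    {κ : α × β → J} (hκ : Measurable κ) {Δ : ℝ}
    (hΔ : ∀ p ∈ S, ∀ p' ∈ S, κ p = κ p' → -(2 * Δ) ≤ crossDifference c p p') {ε : ℝ}
    (hε : 0 ≤ ε) :
    entCost μ ν c ε ≤ (∫ p, c p ∂γ + Δ + ε * log (Fintype.card J) : ℝ) := by
  have := hγ.isProbabilityMeasure
  have hblock : IsCoupling (blockApprox γ κ) μ ν := by
    simpa only [hγ.fst_eq, hγ.snd_eq] using isCoupling_blockApprox (γ := γ) hκ
  have hEnt : Ent (blockApprox γ κ) (μ.prod ν) ≤ (log (Fintype.card J) : ℝ) := by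
    simpa only [hγ.fst_eq, hγ.snd_eq] using Ent_blockApprox_le (γ := γ) hκ
  rw [EReal.coe_add, EReal.coe_mul]
  exact (entCost_le hblock c ε).trans (add_le_add
    (EReal.coe_le_coe_iff.2 (integral_blockApprox_le hκ (hc γ hγ) (hc _ hblock) hS hΔ))
    (mul_le_mul_of_nonneg_left hEnt (EReal.coe_nonneg.2 hε)))

variable {E F ι : Type*} [NormedAddCommGroup E] [InnerProductSpace ℝ E] [NormedAddCommGroup F]
  [NormedSpace ℝ F] {c : E × F → ℝ} {K S : Set (E × F)} {A : F ≃L[ℝ] E}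

theorem IsTwistedOn.neg_crossDifference_le (hA : IsTwistedOn c A S) {p p' : E × F} (hp : p ∈ S)
    (hp' : p' ∈ S) :
    -crossDifference c p p' ≤ 3 / 2 * ‖(p.1 - A p.2) - (p'.1 - A p'.2)‖ ^ 2 := by
  have htwist := (abs_le.1 (hA p hp p' hp')).1
  have hinner := norm_sub_sq_real (p.1 - p'.1) (A (p.2 - p'.2))
  rw [sub_sub_sub_comm, ← map_sub]
  nlinarith [real_inner_le_norm (p.1 - p'.1) (A (p.2 - p'.2)),
    sq_nonneg (‖p.1 - p'.1‖ - ‖A (p.2 - p'.2)‖)]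

theorem exists_norm_sub_le [Finite ι] (hK : IsCompact K) (A : ι → F ≃L[ℝ] E) :
    ∃ R, 0 ≤ R ∧ ∀ i, ∀ p ∈ K, ‖p.1 - A i p.2‖ ≤ R := by
  cases nonempty_fintype ι
  obtain ⟨R, hR⟩ := hK.exists_bound_of_continuousOn (f := fun p i => p.1 - A i p.2) (by fun_prop)
  exact ⟨max R 0, le_max_right _ _, fun i p hp =>
    (norm_le_pi_norm (fun i => p.1 - A i p.2) i).trans ((hR p hp).trans (le_max_left _ _))⟩

variable [MeasurableSpace E] [BorelSpace E] [MeasurableSpace F] [OpensMeasurableSpace (E × F)]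
  [MeasurableSpace ι] [DiscreteMeasurableSpace ι] {κ : E × F → ι} {A : ι → F ≃L[ℝ] E}

theorem measurable_fst_sub_apply_snd [Countable ι] (hκ : Measurable κ) (A : ι → F ≃L[ℝ] E) :
    Measurable fun p : E × F => p.1 - A (κ p) p.2 := by
  have h : Measurable fun z : ι × (E × F) => z.2.1 - A z.1 z.2.2 :=
    measurable_from_prod_countable_right fun i =>
      (by fun_prop : Continuous fun p : E × F => p.1 - A i p.2).measurable
  exact h.comp (hκ.prodMk measurable_id)

variable [FiniteDimensional ℝ E]

/-- Freezing `x - A y` up to an error `δ` bounds the cross differences from below by `O(δ²)`: this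
takes only `O(δ⁻ᵈ)` cells, although `(x, y)` ranges over a set of dimension `2d`. -/
theorem exists_measurable_le_crossDifference [Countable ι] (hκ : Measurable κ)
    (hA : ∀ i, IsTwistedOn c (A i) (K ∩ κ ⁻¹' {i})) {R : ℝ} (hR : 0 ≤ R)
    (hKR : ∀ i, ∀ p ∈ K, ‖p.1 - A i p.2‖ ≤ R) {δ : ℝ} (hδ : 0 < δ) (hδ₁ : δ ≤ 1) :
    ∃ m : ℕ, 0 < m ∧ (m : ℝ) ≤ (2 * R + 1) / δ ∧
      ∃ κ' : E × F → ι × (Fin (Module.finrank ℝ E) → Fin m), Measurable κ' ∧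
        ∀ p ∈ K, ∀ p' ∈ K, κ' p = κ' p' →
          -(2 * (3 / 4 * Module.finrank ℝ E * δ ^ 2)) ≤ crossDifference c p p' := by
  obtain ⟨m, hm, hmR, f, hf, hfδ⟩ := exists_measurable_norm_sub_sq_le (E := E) hR hδ hδ₁
  refine ⟨m, hm, hmR, fun p => (κ p, f (p.1 - A (κ p) p.2)),
    hκ.prodMk (hf.comp (measurable_fst_sub_apply_snd hκ A)), fun p hp p' hp' hpp' => ?_⟩
  obtain ⟨hκpp', hfpp'⟩ := Prod.ext_iff.1 hpp'
  have hdist := hfδ _ _ (hKR _ p hp) (hKR _ p' hp') hfpp'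
  have htwist := (hA (κ p)).neg_crossDifference_le ⟨hp, rfl⟩ ⟨hp', hκpp'.symm⟩
  change κ p = κ p' at hκpp'
  rw [← hκpp'] at hdist
  linarith

/-- Cells of size `δ = √ε` balance the two error terms. -/
theorem IsCoupling.exists_entCost_le [Finite ι] {μ : Measure E} {ν : Measure F}
    [IsProbabilityMeasure μ] {γ : Measure (E × F)} (hγ : IsCoupling γ μ ν)
    (hc : ∀ θ, IsCoupling θ μ ν → Integrable c θ) (hK : IsCompact K)
    (hγK : ∀ᵐ p ∂γ, p ∈ K) (hκ : Measurable κ)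
    (hA : ∀ i, IsTwistedOn c (A i) (K ∩ κ ⁻¹' {i})) :
    ∃ M, 0 ≤ M ∧ ∀ ε ∈ Ioo (0 : ℝ) 1, entCost μ ν c ε ≤
      (∫ p, c p ∂γ + ((Module.finrank ℝ E : ℝ) / 2 * ε * log (1 / ε) + M * ε) : ℝ) := by
  have := hγ.isProbabilityMeasure
  cases nonempty_fintype ι
  have : Nonempty ι := (nonempty_of_isProbabilityMeasure γ).map κ
  obtain ⟨R, hR, hKR⟩ := exists_norm_sub_le hK A
  set d := Module.finrank ℝ E
  refine ⟨3 / 4 * d + (log (Fintype.card ι) + d * log (2 * R + 1)), ?_, fun ε hε => ?_⟩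
  · have hlogR : 0 ≤ log (2 * R + 1) := log_nonneg (by linarith)
    positivity
  obtain ⟨m, hm, hmR, κ', hκ', hκ'c⟩ := exists_measurable_le_crossDifference hκ hA hR hKR
    (sqrt_pos.2 hε.1) (sqrt_le_one.2 hε.2.le)
  have hlog := log_card_prod_fun_le (ι := ι) (d := d) hm (by positivity) (sqrt_pos.2 hε.1) hmR
  rw [one_div, log_inv, log_sqrt hε.1.le] at hlog
  refine (hγ.entCost_le_add_log_card hc hγK hκ' hκ'c hε.1.le).trans (EReal.coe_le_coe_iff.2 ?_)
  rw [sq_sqrt hε.1.le, one_div, log_inv]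
  linarith [mul_le_mul_of_nonneg_left hlog hε.1.le]

end UpperBound

section Gaussian

variable {E : Type*} [NormedAddCommGroup E] [InnerProductSpace ℝ E] [FiniteDimensional ℝ E]
  [MeasurableSpace E] [BorelSpace E]

theorem lintegral_exp_neg_mul_sq_norm_sub {b : ℝ} (hb : 0 < b) (z : E) :
    ∫⁻ x, ENNReal.ofReal (exp (-b * ‖x - z‖ ^ 2)) =
      ENNReal.ofReal ((π / b) ^ ((Module.finrank ℝ E : ℝ) / 2)) := by
  have h := GaussianFourier.integral_rexp_neg_mul_sq_norm (V := E) hb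
  have hpos : 0 < (π / b) ^ ((Module.finrank ℝ E : ℝ) / 2) := by positivity
  have hint : Integrable fun x : E => exp (-b * ‖x‖ ^ 2) :=
    .of_integral_ne_zero (h ▸ hpos.ne')
  rw [lintegral_sub_right_eq_self (fun x => ENNReal.ofReal (exp (-b * ‖x‖ ^ 2))) z, ← h,
    ofReal_integral_eq_lintegral_ofReal hint (ae_of_all _ fun x => (exp_pos _).le)]

theorem exists_mem_forall_le_add {α : Type*} {T : Set α} (hT : T.Nonempty) {e : α → ℝ}
    (he : BddBelow (e '' T)) {ε : ℝ} (hε : 0 < ε) : ∃ z ∈ T, ∀ x ∈ T, e z ≤ e x + ε := by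
  obtain ⟨_, ⟨z, hz, rfl⟩, hlt⟩ := Real.lt_sInf_add_pos (hT.image e) hε
  exact ⟨z, hz, fun x hx =>
    hlt.le.trans (add_le_add (csInf_le he (mem_image_of_mem e hx)) le_rfl)⟩

theorem setLIntegral_exp_neg_div_le {T : Set E} (hT : MeasurableSet T) {e : E → ℝ} {ε : ℝ}
    (hε : 0 < ε) (he : ∀ x ∈ T, ∀ x' ∈ T, 1 / 2 * ‖x - x'‖ ^ 2 ≤ e x + e x') :
    ∫⁻ x in T, ENNReal.ofReal (exp (-(e x / ε))) ≤
      ENNReal.ofReal (exp (1 / 2) * (4 * π * ε) ^ ((Module.finrank ℝ E : ℝ) / 2)) := by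
  rcases T.eq_empty_or_nonempty with rfl | hT₀
  · simp
  have hbdd : BddBelow (e '' T) := ⟨0, forall_mem_image.2 fun x hx => by
    have := he x hx x hx
    rw [sub_self, norm_zero] at this
    linarith⟩
  obtain ⟨z, hz, hzmin⟩ := exists_mem_forall_le_add hT₀ hbdd hε
  have hle : ∀ x ∈ T, exp (-(e x / ε)) ≤ exp (1 / 2) * exp (-(1 / (4 * ε)) * ‖x - z‖ ^ 2) :=
    fun x hx => by
      have hquad : ‖x - z‖ ^ 2 / 4 - ε / 2 ≤ e x := by linarith [he x hx z hz, hzmin x hx]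
      rw [← exp_add, exp_le_exp, neg_le, le_div_iff₀ hε]
      calc _ = ‖x - z‖ ^ 2 / 4 - ε / 2 := by field_simp; ring
        _ ≤ e x := hquad
  calc _ ≤ ∫⁻ x in T, ENNReal.ofReal (exp (1 / 2)) *
        ENNReal.ofReal (exp (-(1 / (4 * ε)) * ‖x - z‖ ^ 2)) :=
        setLIntegral_mono' hT fun x hx => by
          rw [← ENNReal.ofReal_mul (exp_pos _).le]
          exact ENNReal.ofReal_le_ofReal (hle x hx)
    _ ≤ ∫⁻ x, ENNReal.ofReal (exp (1 / 2)) *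
        ENNReal.ofReal (exp (-(1 / (4 * ε)) * ‖x - z‖ ^ 2)) := setLIntegral_le_lintegral _ _
    _ = _ := by
        rw [lintegral_const_mul' _ _ ENNReal.ofReal_ne_top,
          lintegral_exp_neg_mul_sq_norm_sub (by positivity), ← ENNReal.ofReal_mul (exp_pos _).le]
        congr 3
        field_simp

end Gaussian

section MintyCoordinates

variable {E F : Type*} [NormedAddCommGroup E] [NormedSpace ℝ E] [FiniteDimensional ℝ E]
  [MeasurableSpace E] [BorelSpace E] [NormedAddCommGroup F] [NormedSpace ℝ F]
  [MeasurableSpace F] [BorelSpace F] [FiniteDimensional ℝ F]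

theorem exists_lintegral_prod_eq_mul_lintegral_sub (μ : Measure E) [μ.IsAddHaarMeasure]
    (ν : Measure F) [ν.IsAddHaarMeasure] (A : F ≃L[ℝ] E) :
    ∃ k : ℝ≥0, ∀ g : E × F → ℝ≥0∞, Measurable g →
      ∫⁻ p, g p ∂(μ.prod ν) = k * ∫⁻ b, ∫⁻ x, g (x, A.symm (x - b)) ∂μ ∂μ := by
  obtain ⟨k, hk⟩ : ∃ k : ℝ≥0, ν = k • μ.map A.symm :=
    ⟨_, Measure.isAddLeftInvariant_eq_smul ν (μ.map A.symm)⟩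
  refine ⟨k, fun g hg => ?_⟩
  have hgx : ∀ x, Measurable fun y => g (x, y) := fun x => hg.comp measurable_prodMk_left
  have hg' : Measurable fun z : E × E => g (z.1, A.symm (z.1 - z.2)) :=
    hg.comp (measurable_fst.prodMk
      (A.symm.continuous.measurable.comp (measurable_fst.sub measurable_snd)))
  calc ∫⁻ p, g p ∂(μ.prod ν) = ∫⁻ x, ∫⁻ y, g (x, y) ∂ν ∂μ := lintegral_prod _ hg.aemeasurable
    _ = ∫⁻ x, k * ∫⁻ b, g (x, A.symm (x - b)) ∂μ ∂μ := by
        refine lintegral_congr fun x => ?_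
        rw [hk, lintegral_smul_measure, lintegral_map (hgx x) A.symm.continuous.measurable,
          lintegral_sub_left_eq_self (fun z => g (x, A.symm z)) x]
        rfl
    _ = k * ∫⁻ b, ∫⁻ x, g (x, A.symm (x - b)) ∂μ ∂μ := by
        rw [lintegral_const_mul' _ _ ENNReal.coe_ne_top, lintegral_lintegral_swap hg'.aemeasurable]

end MintyCoordinates

section FiberGrowth

variable {E F : Type*} [NormedAddCommGroup E] [InnerProductSpace ℝ E] [NormedAddCommGroup F]
  [NormedSpace ℝ F] {c : E × F → ℝ}

/-- Quadratic growth of a nonnegative gap `e` along the fibres of `(x, y) ↦ x - A y`, in the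
two-point form in which it follows from the twist of the cost by duality. The coordinates
`x` and `x - A y` play the role of Minty's coordinates on a monotone graph. -/
def HasFiberGrowthOn (e : E × F → ℝ) (A : F ≃L[ℝ] E) (S : Set (E × F)) : Prop :=
  ∀ p ∈ S, ∀ p' ∈ S, p.1 - A p.2 = p'.1 - A p'.2 → 1 / 2 * ‖p.1 - p'.1‖ ^ 2 ≤ e p + e p'

theorem HasFiberGrowthOn.congr {e e' : E × F → ℝ} {A : F ≃L[ℝ] E} {S : Set (E × F)}
    (he : HasFiberGrowthOn e A S) (h : EqOn e e' S) : HasFiberGrowthOn e' A S :=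
  fun p hp p' hp' hpp' => h hp ▸ h hp' ▸ he p hp p' hp' hpp'

theorem IsTwistedOn.hasFiberGrowthOn {A : F ≃L[ℝ] E} {S : Set (E × F)} (hA : IsTwistedOn c A S)
    {φ : E → ℝ} {ψ : F → ℝ}
    (hφψ : ∀ p ∈ S, ∀ p' ∈ S, φ p.1 + ψ p'.2 ≤ c (p.1, p'.2)) :
    HasFiberGrowthOn (fun p => c p - (φ p.1 + ψ p.2)) A S := fun p hp p' hp' h => by
  have hA' : A (p.2 - p'.2) = p.1 - p'.1 := by
    calc A (p.2 - p'.2) = p.1 - p'.1 - (p.1 - A p.2 - (p'.1 - A p'.2)) := by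
          rw [map_sub]
          abel
      _ = p.1 - p'.1 := by rw [h, sub_self, sub_zero]
  have htwist := (abs_le.1 (hA p hp p' hp')).1
  rw [hA', real_inner_self_eq_norm_sq, ← sq, crossDifference] at htwist
  linarith [hφψ p hp p' hp', hφψ p' hp' p hp]

variable [FiniteDimensional ℝ E] [MeasurableSpace E] [BorelSpace E] [MeasurableSpace F]
  [BorelSpace F]

theorem HasFiberGrowthOn.lintegral_indicator_le {e : E × F → ℝ} {A : F ≃L[ℝ] E}
    {S : Set (E × F)} (he : HasFiberGrowthOn e A S) (hS : MeasurableSet S) {R : ℝ}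
    (hR : ∀ p ∈ S, ‖p.1 - A p.2‖ ≤ R) {ε : ℝ} (hε : 0 < ε) (b : E) :
    ∫⁻ x, S.indicator (fun p => ENNReal.ofReal (exp (-(e p / ε)))) (x, A.symm (x - b)) ≤
      (Metric.closedBall 0 R).indicator (fun _ => ENNReal.ofReal
        (exp (1 / 2) * (4 * π * ε) ^ ((Module.finrank ℝ E : ℝ) / 2))) b := by
  set f : E → E × F := fun x => (x, A.symm (x - b)) with hf
  have hfm : Measurable f := measurable_id.prodMk
    (A.symm.continuous.measurable.comp (measurable_id.sub_const b))
  have hfb : ∀ x, (f x).1 - A (f x).2 = b := fun x => by simp [hf]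
  change ∫⁻ x, (f ⁻¹' S).indicator (fun x => ENNReal.ofReal (exp (-(e (f x) / ε)))) x ≤ _
  rw [lintegral_indicator (hfm hS)]
  by_cases hb : b ∈ Metric.closedBall 0 R
  · rw [indicator_of_mem hb]
    exact setLIntegral_exp_neg_div_le (hfm hS) hε fun x hx x' hx' =>
      he (f x) hx (f x') hx' ((hfb x).trans (hfb x').symm)
  · have hempty : f ⁻¹' S = ∅ := eq_empty_of_forall_notMem fun x hx =>
      hb (mem_closedBall_zero_iff.2 (hfb x ▸ hR (f x) hx))
    rw [hempty, Measure.restrict_empty, lintegral_zero_measure]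
    exact zero_le

variable [FiniteDimensional ℝ F]

theorem exists_setLIntegral_le_of_hasFiberGrowthOn (ρ : Measure F) [ρ.IsAddHaarMeasure]
    (A : F ≃L[ℝ] E) (R : ℝ) :
    ∃ C : ℝ≥0, ∀ S : Set (E × F), MeasurableSet S → (∀ p ∈ S, ‖p.1 - A p.2‖ ≤ R) →
      ∀ e : E × F → ℝ, Measurable e → HasFiberGrowthOn e A S → ∀ ε > 0,
        ∫⁻ p in S, ENNReal.ofReal (exp (-(e p / ε))) ∂((volume : Measure E).prod ρ) ≤
          C * ENNReal.ofReal (exp (1 / 2) * (4 * π * ε) ^ ((Module.finrank ℝ E : ℝ) / 2)) := by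
  obtain ⟨k, hk⟩ := exists_lintegral_prod_eq_mul_lintegral_sub (volume : Measure E) ρ A
  lift (volume : Measure E) (Metric.closedBall 0 R) to ℝ≥0 using measure_closedBall_lt_top.ne
    with V hV
  refine ⟨k * V, fun S hS hR e hem he ε hε => ?_⟩
  have hexp : Measurable fun p => ENNReal.ofReal (exp (-(e p / ε))) := by fun_prop
  calc _ = k * ∫⁻ b, ∫⁻ x,
        S.indicator (fun p => ENNReal.ofReal (exp (-(e p / ε)))) (x, A.symm (x - b)) := by
        rw [← lintegral_indicator hS, hk _ (hexp.indicator hS)]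
    _ ≤ k * ∫⁻ b, (Metric.closedBall (0 : E) R).indicator (fun _ => ENNReal.ofReal
          (exp (1 / 2) * (4 * π * ε) ^ ((Module.finrank ℝ E : ℝ) / 2))) b :=
        mul_le_mul_right (lintegral_mono fun b => he.lintegral_indicator_le hS hR hε b) _
    _ = _ := by
        rw [lintegral_indicator measurableSet_closedBall, setLIntegral_const, ← hV,
          ENNReal.coe_mul]
        ring

theorem lintegral_le_sum_setLIntegral_inter_preimage {α ι : Type*} [MeasurableSpace α] [Fintype ι]
    {θ : Measure α} {K : Set α} (κ : α → ι) (hK : ∀ᵐ p ∂θ, p ∈ K) (f : α → ℝ≥0∞) :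
    ∫⁻ p, f p ∂θ ≤ ∑ i, ∫⁻ p in K ∩ κ ⁻¹' {i}, f p ∂θ := by
  have hcover : ⋃ i, K ∩ κ ⁻¹' {i} = K := by
    rw [← inter_iUnion, ← preimage_iUnion, iUnion_of_singleton, preimage_univ, inter_univ]
  calc ∫⁻ p, f p ∂θ = ∫⁻ p in ⋃ i, K ∩ κ ⁻¹' {i}, f p ∂θ := by
        rw [hcover, Measure.restrict_eq_self_of_ae_mem hK]
    _ ≤ ∑' i, ∫⁻ p in K ∩ κ ⁻¹' {i}, f p ∂θ := lintegral_iUnion_le _ _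
    _ = ∑ i, ∫⁻ p in K ∩ κ ⁻¹' {i}, f p ∂θ := tsum_fintype _

theorem exists_lintegral_le_of_hasFiberGrowthOn {ι : Type*} [Finite ι] [MeasurableSpace ι]
    [MeasurableSingletonClass ι] {ρ : Measure F} [ρ.IsAddHaarMeasure] {K : Set (E × F)}
    (hK : IsCompact K) {κ : E × F → ι} (hκ : Measurable κ) (A : ι → F ≃L[ℝ] E)
    {θ : Measure (E × F)} {a : ℝ≥0} (hθ : θ ≤ a • (volume : Measure E).prod ρ)
    (hθK : ∀ᵐ p ∂θ, p ∈ K) :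
    ∃ Z : ℝ, 0 < Z ∧ ∀ e, ContinuousOn e K →
      (∀ i, HasFiberGrowthOn e (A i) (K ∩ κ ⁻¹' {i})) → ∀ ε > 0,
        ∫⁻ p, ENNReal.ofReal (exp (-(e p / ε))) ∂θ ≤
          ENNReal.ofReal (Z * ε ^ ((Module.finrank ℝ E : ℝ) / 2)) := by
  cases nonempty_fintype ι
  obtain ⟨R, -, hR⟩ := exists_norm_sub_le hK A
  choose C hC using fun i => exists_setLIntegral_le_of_hasFiberGrowthOn ρ (A i) R
  set n : ℝ := (Module.finrank ℝ E : ℝ) / 2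
  set L : ℝ≥0 := a * ∑ i, C i with hL
  refine ⟨(L + 1) * (exp (1 / 2) * (4 * π) ^ n), by positivity, fun e he hgrowth ε hε => ?_⟩
  have hKm : MeasurableSet K := hK.measurableSet
  have hpiece : ∀ i, MeasurableSet (K ∩ κ ⁻¹' {i}) := fun i =>
    hKm.inter (hκ (measurableSet_singleton i))
  set e' : E × F → ℝ := K.piecewise e 0
  have he'm : Measurable e' := he.measurable_piecewise continuousOn_const hKm
  have heq : EqOn e e' K := (piecewise_eqOn K e 0).symm
  set G : ℝ := exp (1 / 2) * (4 * π * ε) ^ n with hG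
  calc ∫⁻ p, ENNReal.ofReal (exp (-(e p / ε))) ∂θ
      = ∫⁻ p, ENNReal.ofReal (exp (-(e' p / ε))) ∂θ := by
        refine lintegral_congr_ae ?_
        filter_upwards [hθK] with p hp
        rw [heq hp]
    _ ≤ ∑ i, ∫⁻ p in K ∩ κ ⁻¹' {i}, ENNReal.ofReal (exp (-(e' p / ε))) ∂θ :=
        lintegral_le_sum_setLIntegral_inter_preimage κ hθK _
    _ ≤ ∑ i, a * (C i * ENNReal.ofReal G) := by
        refine Finset.sum_le_sum fun i _ => ?_
        refine (lintegral_mono' (Measure.restrict_mono_measure hθ _) le_rfl).trans ?_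
        rw [Measure.restrict_smul, lintegral_smul_measure]
        exact mul_le_mul_right (hC i _ (hpiece i) (fun p hp => hR i p hp.1) e' he'm
          ((hgrowth i).congr (heq.mono inter_subset_left)) ε hε) _
    _ = ENNReal.ofReal (L * G) := by
        rw [ENNReal.ofReal_mul L.coe_nonneg, ENNReal.ofReal_coe_nnreal, hL, ENNReal.coe_mul,
          ENNReal.ofNNReal_finsetSum, mul_assoc, Finset.sum_mul, Finset.mul_sum]
    _ ≤ _ := by
        rw [hG, mul_rpow (by positivity) hε.le, ← mul_assoc (exp _), ← mul_assoc]
        gcongr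
        exact le_add_of_nonneg_right zero_le_one

end FiberGrowth

section LowerBound

theorem le_smul_of_rnDeriv_le {α : Type*} [MeasurableSpace α] {μ ν : Measure α} [SigmaFinite μ]
    [SigmaFinite ν] (hμν : μ ≪ ν) {C : ℝ≥0} (h : ∀ᵐ x ∂ν, μ.rnDeriv ν x ≤ C) : μ ≤ C • ν :=
  calc μ = ν.withDensity (μ.rnDeriv ν) := (Measure.withDensity_rnDeriv_eq μ ν hμν).symm
    _ ≤ ν.withDensity fun _ => C := withDensity_mono h
    _ = C • ν := withDensity_const _

theorem prod_le_smul_prod {α β : Type*} [MeasurableSpace α] [MeasurableSpace β]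
    {μ μ' : Measure α} {ν ν' : Measure β} [SFinite μ'] [SFinite ν] [SFinite ν'] {a b : ℝ≥0}
    (hμ : μ ≤ a • μ') (hν : ν ≤ b • ν') : μ.prod ν ≤ (a * b) • μ'.prod ν' := by
  refine (Measure.prod_mono hμ hν).trans_eq ?_
  rw [Measure.prod_smul_left, Measure.prod_smul_right, smul_smul]

variable {E F : Type*} [NormedAddCommGroup E] [InnerProductSpace ℝ E] [FiniteDimensional ℝ E]
  [MeasurableSpace E] [BorelSpace E] [NormedAddCommGroup F] [NormedSpace ℝ F]
  [FiniteDimensional ℝ F] [MeasurableSpace F] [BorelSpace F] {μ : Measure E} {ν ρ : Measure F}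
  [IsProbabilityMeasure μ] [IsProbabilityMeasure ν] [ρ.IsAddHaarMeasure] {c : E × F → ℝ}
  {s : Set E} {t : Set F}

theorem exists_forall_le_entCost {ι : Type*} [Finite ι] [MeasurableSpace ι]
    [MeasurableSingletonClass ι] (hs : IsCompact s) (ht : IsCompact t) (hμs : ∀ᵐ x ∂μ, x ∈ s)
    (hνt : ∀ᵐ y ∂ν, y ∈ t) {a b : ℝ≥0} (hμ : μ ≤ a • volume) (hν : ν ≤ b • ρ)
    (hc : ContinuousOn c (s ×ˢ t)) {κ : E × F → ι} (hκ : Measurable κ) {A : ι → F ≃L[ℝ] E}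
    (hA : ∀ i, IsTwistedOn c (A i) (s ×ˢ t ∩ κ ⁻¹' {i})) :
    ∃ m : ℝ, 0 ≤ m ∧ ∀ ε > 0,
      entCost μ ν c 0 + ((Module.finrank ℝ E : ℝ) / 2 * ε * log (1 / ε) - m * ε : ℝ) ≤
        entCost μ ν c ε := by
  obtain ⟨γ, -, hγc, hdual⟩ := exists_isCoupling_entCost_zero_eq hs ht hμs hνt hc
  have hint : ∀ θ, IsCoupling θ μ ν → Integrable c θ := fun θ hθ =>
    hθ.integrable_of_continuousOn hs ht hμs hνt hc
  obtain ⟨Z, hZ, hgauss⟩ := exists_lintegral_le_of_hasFiberGrowthOn (hs.prod ht) hκ A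
    (prod_le_smul_prod hμ hν) (isCoupling_prod.ae_mem_prod hμs hνt)
  refine ⟨max (log Z) 0, le_max_right _ _, fun ε hε => ?_⟩
  rw [hγc, ← EReal.coe_add]
  refine EReal.ge_of_forall_gt_iff_ge.1 fun r hr => ?_
  obtain ⟨φ, ψ, hφψ, hgap⟩ := hdual _ (sub_pos.2 (EReal.coe_lt_coe_iff.1 hr))
  have hgrowth : ∀ i, HasFiberGrowthOn (fun p => c p - (φ p.1 + ψ p.2)) (A i)
      (s ×ˢ t ∩ κ ⁻¹' {i}) := fun i =>
    (hA i).hasFiberGrowthOn fun p hp p' hp' => hφψ (p.1, p'.2) ⟨hp.1.1, hp'.1.2⟩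
  have hcont : ContinuousOn (fun p => c p - (φ p.1 + ψ p.2)) (s ×ˢ t) := hc.sub (by fun_prop)
  have hpow : 0 < ε ^ ((Module.finrank ℝ E : ℝ) / 2) := rpow_pos_of_pos hε _
  refine le_trans (EReal.coe_le_coe_iff.2 ?_) (le_entCost_of_lintegral_exp_le hint
    (φ.integrable μ) (ψ.integrable ν) hε (hgauss _ hcont hgrowth ε hε))
  rw [log_mul hZ.ne' hpow.ne', log_rpow hε]
  rw [one_div, log_inv] at hgap
  linarith [mul_le_mul_of_nonneg_right (le_max_left (log Z) 0) hε.le]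

end LowerBound

section Expansion

variable {E F : Type*} [NormedAddCommGroup E] [InnerProductSpace ℝ E] [FiniteDimensional ℝ E]
  [MeasurableSpace E] [BorelSpace E] [NormedAddCommGroup F] [NormedSpace ℝ F]
  [FiniteDimensional ℝ F] [MeasurableSpace F] [BorelSpace F]

theorem main_expansion_general {Ωm : Set E} {Ωp : Set F} (hΩm : IsOpen Ωm) (hΩp : IsOpen Ωp)
    (μm : Measure E) (μp ρ : Measure F) [IsProbabilityMeasure μm] [IsProbabilityMeasure μp]
    [ρ.IsAddHaarMeasure]
    (hsm : ∃ K, IsCompact K ∧ K ⊆ Ωm ∧ μm Kᶜ = 0) (hsp : ∃ K, IsCompact K ∧ K ⊆ Ωp ∧ μp Kᶜ = 0)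
    (hacm : μm ≪ volume) (hacp : μp ≪ ρ)
    (hbdm : ∃ C : ℝ≥0∞, C ≠ ⊤ ∧ ∀ᵐ x ∂volume, μm.rnDeriv volume x ≤ C)
    (hbdp : ∃ C : ℝ≥0∞, C ≠ ⊤ ∧ ∀ᵐ y ∂ρ, μp.rnDeriv ρ y ≤ C)
    {c : E × F → ℝ} (hc : ContDiffOn ℝ 2 c (Ωm ×ˢ Ωp))
    (htwist : ∀ p ∈ Ωm ×ˢ Ωp, (mixedHessian c p).IsInvertible) :
    ∃ m M : ℝ, 0 ≤ m ∧ 0 ≤ M ∧ ∀ ε ∈ Ioo (0 : ℝ) 1,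
      entCost μm μp c 0 + ((Module.finrank ℝ E : ℝ) / 2 * ε * log (1 / ε) - m * ε : ℝ) ≤
          entCost μm μp c ε ∧
        entCost μm μp c ε ≤
          entCost μm μp c 0 + ((Module.finrank ℝ E : ℝ) / 2 * ε * log (1 / ε) + M * ε : ℝ) := by
  obtain ⟨s, hs, hsΩ, hμs⟩ := hsm
  obtain ⟨t, ht, htΩ, hνt⟩ := hsp
  obtain ⟨a, ha, hμ⟩ := hbdm
  obtain ⟨b, hb, hν⟩ := hbdp
  lift a to ℝ≥0 using ha
  lift b to ℝ≥0 using hb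
  have hst : s ×ˢ t ⊆ Ωm ×ˢ Ωp := prod_mono hsΩ htΩ
  have hcst : ContinuousOn c (s ×ˢ t) := hc.continuousOn.mono hst
  obtain ⟨γ, hγ, hγc, -⟩ := exists_isCoupling_entCost_zero_eq hs ht hμs hνt hcst
  have := hγ.isProbabilityMeasure
  have hst₀ : (s ×ˢ t).Nonempty := (hγ.ae_mem_prod hμs hνt).exists
  obtain ⟨T, κ, A, hκ, hA⟩ := exists_measurable_isTwistedOn (hs.prod ht) hst₀
    (fun p hp => hc.contDiffAt ((hΩm.prod hΩp).mem_nhds (hst hp))) fun p hp => htwist p (hst hp)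
  obtain ⟨m, hm, hlower⟩ := exists_forall_le_entCost hs ht hμs hνt (le_smul_of_rnDeriv_le hacm hμ)
    (le_smul_of_rnDeriv_le hacp hν) hcst hκ hA
  obtain ⟨M, hM, hupper⟩ := hγ.exists_entCost_le
    (fun θ hθ => hθ.integrable_of_continuousOn hs ht hμs hνt hcst) (hs.prod ht)
    (hγ.ae_mem_prod hμs hνt) hκ hA
  refine ⟨m, M, hm, hM, fun ε hε => ⟨hlower ε hε.1, ?_⟩⟩
  rw [hγc, ← EReal.coe_add]
  exact hupper ε hε

end Expansion

/-- **Main theorem**: for infinitesimally twisted `C²` costs on open convex sets and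
absolutely continuous, compactly supported marginals with `L^∞` densities,
`v₀ + (d/2) ε log(1/ε) - m ε ≤ v_ε ≤ v₀ + (d/2) ε log(1/ε) + M ε` for `ε ∈ (0,1)`. -/
theorem main_expansion {d : ℕ}
    (Ωm Ωp : Set (EuclideanSpace ℝ (Fin d)))
    (hΩmo : IsOpen Ωm) (hΩpo : IsOpen Ωp) (hΩmc : Convex ℝ Ωm) (hΩpc : Convex ℝ Ωp)
    (μm μp : Measure (EuclideanSpace ℝ (Fin d)))
    [IsProbabilityMeasure μm] [IsProbabilityMeasure μp]
    (hsm : ∃ K, IsCompact K ∧ K ⊆ Ωm ∧ μm Kᶜ = 0)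
    (hsp : ∃ K, IsCompact K ∧ K ⊆ Ωp ∧ μp Kᶜ = 0)
    (hacm : μm ≪ volume) (hacp : μp ≪ volume)
    (hbdm : ∃ C : ℝ≥0∞, C ≠ ⊤ ∧ ∀ᵐ x ∂volume, μm.rnDeriv volume x ≤ C)
    (hbdp : ∃ C : ℝ≥0∞, C ≠ ⊤ ∧ ∀ᵐ x ∂volume, μp.rnDeriv volume x ≤ C)
    (c : EuclideanSpace ℝ (Fin d) × EuclideanSpace ℝ (Fin d) → ℝ)
    (hc : ContDiffOn ℝ 2 c (Ωm ×ˢ Ωp))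
    (htwist : ∀ x ∈ Ωm, ∀ y ∈ Ωp, (crossDeriv c x y).det ≠ 0) :
    ∃ m M : ℝ, 0 ≤ m ∧ 0 ≤ M ∧ ∀ ε ∈ Set.Ioo (0 : ℝ) 1,
      entCost μm μp c 0 + (((d : ℝ) / 2 * ε * Real.log (1 / ε) - m * ε : ℝ) : EReal)
          ≤ entCost μm μp c ε ∧
      entCost μm μp c ε
          ≤ entCost μm μp c 0 + (((d : ℝ) / 2 * ε * Real.log (1 / ε) + M * ε : ℝ) : EReal) := by
  simpa only [finrank_euclideanSpace_fin] using main_expansion_general hΩmo hΩpo μm μp volume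
    hsm hsp hacm hacp hbdm hbdp hc fun p hp => isInvertible_mixedHessian
      (hc.contDiffAt ((hΩmo.prod hΩpo).mem_nhds hp)) (htwist p.1 hp.1 p.2 hp.2)
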